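/- Let α ∈ Δ' and let v ∈ DF(I(α)). Suppose that it is not the case that all three of the following hold: v ∉ ℚ³, v₂ > 0, and I(v) = I(α). Then v is represented by a v-goober in B(I(α)): there exist a minimal set Y for σ with Y ⊆ B(I(α)) and a constant M > 0 such that ‖κ_σ(s,r) − r·v‖ < M for all s ∈ Y and all r ∈ ℕ; in particular, every point of Y has Birkhoff digit frequency v. -/

import Mathlib

open Filter Topology MeasureTheory

/-- The sequence space `Σ⁺ = {0,1,2}^ℕ` (with the product topology). -/
abbrev Seq3 := ℕ → Fin 3

/-- The shift map `σ`. -/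
def shift (s : Seq3) : Seq3 := fun n => s (n + 1)

/-- The observable `κ(s) = e_{s₀}`. -/
noncomputable def kappa (s : Seq3) : Fin 3 → ℝ := fun i => if i = s 0 then 1 else 0

/-- The cocycle `κ_σ(s,r) = Σ_{i<r} κ(σⁱ s)`. -/
noncomputable def birk (s : Seq3) (r : ℕ) : Fin 3 → ℝ :=
  ∑ i ∈ Finset.range r, kappa (shift^[i] s)

/-- The Birkhoff digit frequency of `s` exists and equals `v`. -/
def hasFreq (s : Seq3) (v : Fin 3 → ℝ) : Prop :=
  Tendsto (fun r : ℕ => (r : ℝ)⁻¹ • birk s r) atTop (nhds v)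

/-- The lexicographic order on `Σ⁺`. -/
def lexLe (s t : Seq3) : Prop :=
  s = t ∨ ∃ n, (∀ i, i < n → s i = t i) ∧ s n < t n

/-- The set `Max` of maximal sequences. -/
def MaxSet : Set Seq3 := {w | w 0 = 2 ∧ ∀ r : ℕ, lexLe (shift^[r] w) w}

/-- The symbolic β-shift `B(w)`. -/
def BetaShift (w : Seq3) : Set Seq3 := {s | ∀ r : ℕ, lexLe (shift^[r] s) w}

/-- The digit frequency set `DF(w)`. -/
def DF (w : Seq3) : Set (Fin 3 → ℝ) := {v | ∃ s ∈ BetaShift w, hasFreq s v}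

/-- The Misiurewicz–Ziemian digit frequency set `DF_MZ(X)` of a subset `X ⊆ Σ⁺`. -/
def DFMZ (X : Set Seq3) : Set (Fin 3 → ℝ) :=
  {v | ∃ (s : ℕ → Seq3) (r : ℕ → ℕ), (∀ i, s i ∈ X) ∧ Tendsto r atTop atTop ∧
    Tendsto (fun i => (r i : ℝ)⁻¹ • birk (s i) (r i)) atTop (nhds v)}

/-- The standard 2-simplex `Δ ⊆ ℝ³`. -/
def Delta : Set (Fin 3 → ℝ) := {α | (∀ i, 0 ≤ α i) ∧ α 0 + α 1 + α 2 = 1}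

/-- `Δ' = {α ∈ Δ : α₂ > 0}`. -/
def Delta' : Set (Fin 3 → ℝ) := {α | α ∈ Delta ∧ 0 < α 2}

/-- `I` is the infimax sequence of `α`: the infimum, in the lexicographic order, of the
(nonempty) set of maximal sequences with digit frequency `α`; it belongs to `Max`. -/
def IsInfimax (α : Fin 3 → ℝ) (I : Seq3) : Prop :=
  {w | w ∈ MaxSet ∧ hasFreq w α}.Nonempty ∧ I ∈ MaxSet ∧
    (∀ w, w ∈ MaxSet ∧ hasFreq w α → lexLe I w) ∧
    (∀ b : Seq3, (∀ w, w ∈ MaxSet ∧ hasFreq w α → lexLe b w) → lexLe b I)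

/-- The closure of the forward `σ`-orbit of `s` (e.g. `C_α` is `orbitClosure I(α)`). -/
def orbitClosure (s : Seq3) : Set Seq3 := closure {t | ∃ r : ℕ, shift^[r] s = t}

/-- A vector in `ℝ³` is rational if all its coordinates are. -/
def IsRat (v : Fin 3 → ℝ) : Prop := ∀ i, ∃ q : ℚ, v i = (q : ℝ)

/-- A minimal set of a continuous map: a nonempty compact invariant set in which every
point has dense forward orbit. -/
def IsMinimalSet {X : Type*} [TopologicalSpace X] (f : X → X) (C : Set X) : Prop :=
  C.Nonempty ∧ IsCompact C ∧ Set.MapsTo f C C ∧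
    ∀ x ∈ C, C ⊆ closure {y | ∃ n : ℕ, f^[n] x = y}

/-! ### Basics -/

def sh (r : ℕ) (s : Seq3) : Seq3 := fun n => s (n + r)

theorem shift_iter (r : ℕ) (s : Seq3) : shift^[r] s = sh r s := by
  induction r generalizing s with
  | zero => rfl
  | succ k ih =>
    rw [Function.iterate_succ_apply, ih]
    funext n
    simp only [sh, shift]
    congr 1

theorem sh_zero (s : Seq3) : sh 0 s = s := rfl

theorem sh_sh (a b : ℕ) (s : Seq3) : sh a (sh b s) = sh (b + a) s := by
  funext n
  simp only [sh]
  congr 1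
  omega

def lexLt (s t : Seq3) : Prop := ∃ n, (∀ i, i < n → s i = t i) ∧ s n < t n

theorem lexLt_iff (s t : Seq3) : lexLt s t ↔ toLex s < toLex t := Iff.rfl

theorem lexLe_iff (s t : Seq3) : lexLe s t ↔ toLex s ≤ toLex t := by
  rw [le_iff_eq_or_lt]
  exact Iff.rfl

theorem lexLe_refl (s : Seq3) : lexLe s s := Or.inl rfl

theorem lexLe_trans {a b c : Seq3} (h : lexLe a b) (h' : lexLe b c) : lexLe a c := by
  rw [lexLe_iff] at *
  exact le_trans h h'

theorem lexLt.le {a b : Seq3} (h : lexLt a b) : lexLe a b := Or.inr h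

theorem lexLe_of_not {a b : Seq3} (h : ¬ lexLt b a) : lexLe a b := by
  rw [lexLt_iff] at h
  rw [lexLe_iff]
  exact not_lt.1 h

theorem not_lexLt {a b : Seq3} (h : lexLe a b) : ¬ lexLt b a := by
  rw [lexLe_iff] at h
  rw [lexLt_iff]
  exact not_lt.2 h

theorem lexLt_head {a b : Seq3} (h : a 0 < b 0) : lexLt a b :=
  ⟨0, fun i hi => absurd hi (Nat.not_lt_zero i), h⟩

theorem lexLt_head1 {a b : Seq3} (h0 : a 0 = b 0) (h : a 1 < b 1) : lexLt a b :=
  ⟨1, fun i hi => by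
    have : i = 0 := by omega
    subst this; exact h0, h⟩

theorem lexLt_sh {a b : Seq3} (r : ℕ) (h0 : ∀ i, i < r → a i = b i) (h : lexLt (sh r a) (sh r b)) :
    lexLt a b := by
  obtain ⟨n, hn, hlt⟩ := h
  refine ⟨n + r, fun i hi => ?_, hlt⟩
  by_cases hir : i < r
  · exact h0 i hir
  · have := hn (i - r) (by omega)
    simp only [sh] at this
    rwa [Nat.sub_add_cancel (by omega)] at this

theorem lexLe_head_le {a b : Seq3} (h : lexLe a b) : a 0 ≤ b 0 := by
  by_contra hc
  exact not_lexLt h (lexLt_head (not_le.1 hc))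

def agree (N : ℕ) (a b : Seq3) : Prop := ∀ i, i < N → a i = b i

theorem agree.symm {N : ℕ} {a b : Seq3} (h : agree N a b) : agree N b a :=
  fun i hi => (h i hi).symm

theorem agree.trans {N : ℕ} {a b c : Seq3} (h : agree N a b) (h' : agree N b c) : agree N a c :=
  fun i hi => (h i hi).trans (h' i hi)

/-- closedness from below -/
theorem lexLe_of_agree_left {a b : Seq3} (h : ∀ N, ∃ c, agree N a c ∧ lexLe c b) : lexLe a b := by
  apply lexLe_of_not
  rintro ⟨n, hn, hlt⟩
  obtain ⟨c, hc, hcb⟩ := h (n + 1)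
  refine not_lexLt hcb ⟨n, fun i hi => ?_, ?_⟩
  · rw [hn i hi, hc i (by omega)]
  · rw [← hc n (by omega)]; exact hlt

theorem lexLe_of_agree_right {a b : Seq3} (h : ∀ N, ∃ c, agree N b c ∧ lexLe a c) : lexLe a b := by
  apply lexLe_of_not
  rintro ⟨n, hn, hlt⟩
  obtain ⟨c, hc, hcb⟩ := h (n + 1)
  refine not_lexLt hcb ⟨n, fun i hi => ?_, ?_⟩
  · rw [← hn i hi, hc i (by omega)]
  · rw [← hc n (by omega)]; exact hlt

theorem agree_sandwich {N : ℕ} {a b c : Seq3} (hac : agree N a c) (h1 : lexLe a b)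
    (h2 : lexLe b c) : agree N a b := by
  intro i
  induction i using Nat.strong_induction_on with
  | _ i ih =>
    intro hi
    by_contra hne
    rcases lt_or_gt_of_ne hne with h | h
    · refine not_lexLt h2 ⟨i, fun j hj => ?_, ?_⟩
      · rw [← hac j (by omega), ih j hj (by omega)]
      · rw [← hac i hi]; exact h
    · exact not_lexLt h1 ⟨i, fun j hj => (ih j hj (by omega)).symm, h⟩

/-- coinduction principle -/
theorem lexLe_coind (R : Seq3 → Seq3 → Prop)
    (hR : ∀ a b, R a b → lexLe a b ∨ ∃ k, 0 < k ∧ agree k a b ∧ R (sh k a) (sh k b))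
    {a b : Seq3} (h : R a b) : lexLe a b := by
  apply lexLe_of_not
  rintro ⟨n, hn, hlt⟩
  induction n using Nat.strong_induction_on generalizing a b with
  | _ n ih =>
    rcases hR a b h with h1 | ⟨k, hk, hag, hR'⟩
    · exact not_lexLt h1 ⟨n, hn, hlt⟩
    · by_cases hnk : n < k
      · rw [hag n hnk] at hlt; exact lt_irrefl _ hlt
      · refine ih (n - k) (by omega) hR' (fun i hi => hn _ (by omega)) ?_
        simp only [sh]
        rwa [Nat.sub_add_cancel (by omega)]

theorem mem_beta {w s : Seq3} : s ∈ BetaShift w ↔ ∀ r, lexLe (sh r s) w := by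
  simp only [BetaShift, Set.mem_ofPred_eq, shift_iter]

theorem mem_max {w : Seq3} : w ∈ MaxSet ↔ w 0 = 2 ∧ ∀ r, lexLe (sh r w) w := by
  simp only [MaxSet, Set.mem_ofPred_eq, shift_iter]

def dom (a b : Seq3) : Prop := ∀ r, ∃ r', lexLe (sh r a) (sh r' b)

theorem dom.trans {a b c : Seq3} (h : dom a b) (h' : dom b c) : dom a c := by
  intro r
  obtain ⟨r1, h1⟩ := h r
  obtain ⟨r2, h2⟩ := h' r1
  exact ⟨r2, lexLe_trans h1 h2⟩

theorem dom.refl (a : Seq3) : dom a a := fun r => ⟨r, lexLe_refl _⟩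

theorem dom.beta {a b w : Seq3} (h : dom a b) (hb : b ∈ BetaShift w) : a ∈ BetaShift w := by
  rw [mem_beta] at *
  intro r
  obtain ⟨r1, h1⟩ := h r
  exact lexLe_trans h1 (hb r1)

/-! ### The two elementary substitutions -/

def hd (b : Bool) (c : Fin 3) : Fin 3 := if b then (if c = 0 then 1 else 2) else c
def fl (b : Bool) (c : Fin 3) : Bool := if b then decide (c = 1) else decide (c = 2)
def bl (b : Bool) (c : Fin 3) : ℕ := if fl b c then 2 else 1

def subAux (b : Bool) : ℕ → Seq3 → Fin 3
  | 0, x => hd b (x 0)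
  | 1, x => if fl b (x 0) then 0 else subAux b 0 (sh 1 x)
  | t + 2, x => if fl b (x 0) then subAux b t (sh 1 x) else subAux b (t + 1) (sh 1 x)

def su (b : Bool) (x : Seq3) : Seq3 := fun t => subAux b t x

theorem su_0 (b : Bool) (x : Seq3) : su b x 0 = hd b (x 0) := by
  simp [su, subAux]

theorem su_1 {b : Bool} {x : Seq3} (h : fl b (x 0) = true) : su b x 1 = 0 := by
  simp [su, subAux, h]

theorem sh_su1 (b : Bool) (x : Seq3) : sh (bl b (x 0)) (su b x) = su b (sh 1 x) := by
  funext t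
  by_cases h : fl b (x 0) = true
  · simp [sh, su, bl, h, subAux]
  · cases t with
    | zero => simp [sh, su, bl, h, subAux]
    | succ t => simp [sh, su, bl, h, subAux]

theorem su_1' {b : Bool} {x : Seq3} (h : fl b (x 0) = false) : su b x 1 = hd b (x 1) := by
  simp [su, subAux, h, sh]

def pos (b : Bool) (x : Seq3) : ℕ → ℕ
  | 0 => 0
  | j + 1 => pos b x j + bl b (x j)

theorem bl_pos (b : Bool) (c : Fin 3) : 1 ≤ bl b c := by
  unfold bl; split_ifs <;> omega

theorem le_pos (b : Bool) (x : Seq3) (j : ℕ) : j ≤ pos b x j := by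
  induction j with
  | zero => simp [pos]
  | succ j ih => have := bl_pos b (x j); simp only [pos]; omega

theorem sh_pos (b : Bool) (x : Seq3) (j : ℕ) : sh (pos b x j) (su b x) = su b (sh j x) := by
  induction j with
  | zero => rfl
  | succ j ih =>
    have h := sh_su1 b (sh j x)
    rw [sh_sh] at h
    have h0 : sh j x 0 = x j := by simp [sh]
    rw [← h, h0, ← ih, sh_sh]
    rfl

theorem pos_cover (b : Bool) (x : Seq3) (r : ℕ) :
    ∃ j, r = pos b x j ∨ (r = pos b x j + 1 ∧ fl b (x j) = true) := by
  induction r with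
  | zero => exact ⟨0, Or.inl rfl⟩
  | succ r ih =>
    obtain ⟨j, h | ⟨h, hf⟩⟩ := ih
    · by_cases hf : fl b (x j) = true
      · exact ⟨j, Or.inr ⟨by omega, hf⟩⟩
      · refine ⟨j + 1, Or.inl ?_⟩
        simp [pos, bl, hf, h]
    · refine ⟨j + 1, Or.inl ?_⟩
      simp [pos, bl, hf, h]

theorem hd_of_fl {b : Bool} {c : Fin 3} (h : fl b c = true) : hd b c = 2 := by
  revert h; revert c; cases b <;> decide

theorem hd_two (b : Bool) : hd b 2 = 2 := by cases b <;> decide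

theorem bl_le (b : Bool) (c : Fin 3) : bl b c ≤ 2 := by
  unfold bl; split_ifs <;> omega

theorem agree_su1 {b : Bool} {x y : Seq3} (h : x 0 = y 0) :
    agree (bl b (x 0)) (su b x) (su b y) := by
  intro i hi
  have h2 := bl_le b (x 0)
  rcases Nat.eq_zero_or_pos i with rfl | hp
  · rw [su_0, su_0, h]
  · have : i = 1 := by omega
    subst this
    have hf : fl b (x 0) = true := by
      by_contra hc
      simp [bl, hc] at hi
    rw [su_1 hf, su_1 (by rwa [← h])]

theorem su_strict (b : Bool) {x y : Seq3} (h : lexLt x y) : lexLt (su b x) (su b y) := by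
  obtain ⟨n, hn, hlt⟩ := h
  induction n generalizing x y with
  | zero =>
    by_cases hh : hd b (x 0) < hd b (y 0)
    · exact lexLt_head (by rw [su_0, su_0]; exact hh)
    · have key : ∀ (b : Bool) (c d : Fin 3), c < d → ¬ hd b c < hd b d →
          hd b c = hd b d ∧ fl b c = true ∧ fl b d = false ∧ ∀ e, 0 < hd b e := by decide
      obtain ⟨h1, h2, h3, h4⟩ := key b _ _ hlt hh
      refine lexLt_head1 (by rw [su_0, su_0, h1]) ?_
      rw [su_1 h2, su_1' h3]
      exact h4 _
  | succ n ih =>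
    have h0 : x 0 = y 0 := hn 0 (by omega)
    refine lexLt_sh (bl b (x 0)) (agree_su1 h0) ?_
    rw [sh_su1]
    conv_rhs => rw [h0, sh_su1]
    exact ih (fun i hi => hn (i + 1) (by omega)) hlt

theorem su_mono (b : Bool) {x y : Seq3} (h : lexLe x y) : lexLe (su b x) (su b y) := by
  rcases h with h | h
  · rw [h]; exact lexLe_refl _
  · exact (su_strict b h).le

theorem su_reflect (b : Bool) {x y : Seq3} (h : lexLe (su b x) (su b y)) : lexLe x y :=
  lexLe_of_not fun hc => not_lexLt h (su_strict b hc)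

theorem su_shift_le (b : Bool) (x : Seq3) (r : ℕ) :
    ∃ j, lexLe (sh r (su b x)) (su b (sh j x)) := by
  obtain ⟨j, h | ⟨h, hf⟩⟩ := pos_cover b x r
  · exact ⟨j, by rw [h, sh_pos]; exact lexLe_refl _⟩
  · refine ⟨j, (lexLt_head ?_).le⟩
    have hf' : fl b (sh j x 0) = true := by simpa [sh] using hf
    rw [h, ← sh_sh, sh_pos, su_0, hd_of_fl hf']
    show su b (sh j x) (0 + 1) < 2
    rw [su_1 hf']
    decide

theorem su_dom (b : Bool) {x y : Seq3} (h : dom x y) : dom (su b x) (su b y) := by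
  intro r
  obtain ⟨j, hj⟩ := su_shift_le b x r
  obtain ⟨j', hj'⟩ := h j
  exact ⟨pos b y j', by rw [sh_pos]; exact lexLe_trans hj (su_mono b hj')⟩

theorem su_max (b : Bool) {m : Seq3} (h : m ∈ MaxSet) : su b m ∈ MaxSet := by
  rw [mem_max] at *
  refine ⟨by rw [su_0, h.1, hd_two], fun r => ?_⟩
  obtain ⟨j, hj⟩ := su_shift_le b m r
  exact lexLe_trans hj (su_mono b (h.2 j))

/-! ### Iterated substitutions -/

def Phi (b : ℕ → Bool) : ℕ → Seq3 → Seq3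
  | 0, x => x
  | k + 1, x => Phi b k (su (b k) x)

theorem Phi_mono (b : ℕ → Bool) (k : ℕ) {x y : Seq3} (h : lexLe x y) :
    lexLe (Phi b k x) (Phi b k y) := by
  induction k generalizing x y with
  | zero => exact h
  | succ k ih => exact ih (su_mono _ h)

theorem Phi_reflect (b : ℕ → Bool) (k : ℕ) {x y : Seq3} (h : lexLe (Phi b k x) (Phi b k y)) :
    lexLe x y := by
  induction k generalizing x y with
  | zero => exact h
  | succ k ih => exact su_reflect _ (ih h)

theorem Phi_dom (b : ℕ → Bool) (k : ℕ) {x y : Seq3} (h : dom x y) :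
    dom (Phi b k x) (Phi b k y) := by
  induction k generalizing x y with
  | zero => exact h
  | succ k ih => exact ih (su_dom _ h)

theorem Phi_max (b : ℕ → Bool) (k : ℕ) {x : Seq3} (h : x ∈ MaxSet) : Phi b k x ∈ MaxSet := by
  induction k generalizing x with
  | zero => exact h
  | succ k ih => exact ih (su_max _ h)

theorem Phi_shift (b : ℕ → Bool) (k : ℕ) (x : Seq3) (j : ℕ) :
    ∃ r, sh r (Phi b k x) = Phi b k (sh j x) := by
  induction k generalizing x j with
  | zero => exact ⟨j, rfl⟩
  | succ k ih =>
    obtain ⟨r, hr⟩ := ih (su (b k) x) (pos (b k) x j)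
    exact ⟨r, by rw [Phi, hr, sh_pos]; rfl⟩

def len (b : ℕ → Bool) : ℕ → Fin 3 → ℕ
  | 0, _ => 1
  | k + 1, c => len b k (hd (b k) c) + if fl (b k) c then len b k 0 else 0

theorem len_pos (b : ℕ → Bool) (k : ℕ) (c : Fin 3) : 1 ≤ len b k c := by
  induction k generalizing c with
  | zero => simp [len]
  | succ k ih => have := ih (hd (b k) c); simp only [len]; omega

theorem Phi_len_shift (b : ℕ → Bool) (k : ℕ) (x : Seq3) :
    sh (len b k (x 0)) (Phi b k x) = Phi b k (sh 1 x) := by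
  induction k generalizing x with
  | zero => rfl
  | succ k ih =>
    have h1 := ih (su (b k) x)
    rw [su_0] at h1
    simp only [Phi, len]
    rw [← sh_su1]
    by_cases hf : fl (b k) (x 0) = true
    · have h2 := ih (sh 1 (su (b k) x))
      have h3 : sh 1 (su (b k) x) 0 = 0 := su_1 hf
      rw [h3, ← h1, sh_sh, sh_sh] at h2
      simp [hf, bl, h2]
    · simp [hf, bl, h1]

theorem Phi_len_agree (b : ℕ → Bool) (k : ℕ) {x y : Seq3} (h : x 0 = y 0) :
    agree (len b k (x 0)) (Phi b k x) (Phi b k y) := by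
  induction k generalizing x y with
  | zero =>
    intro i hi
    have : i = 0 := by simp [len] at hi; exact hi
    subst this; exact h
  | succ k ih =>
    have hs : su (b k) x 0 = su (b k) y 0 := by rw [su_0, su_0, h]
    have h1 := ih hs
    have e1 := Phi_len_shift b k (su (b k) x)
    have e2 := Phi_len_shift b k (su (b k) y)
    rw [← hs] at e2
    rw [su_0] at h1 e1 e2
    intro i hi
    simp only [Phi, len] at hi ⊢
    by_cases hlt : i < len b k (hd (b k) (x 0))
    · exact h1 i hlt
    · by_cases hf : fl (b k) (x 0) = true
      · have hfy : fl (b k) (y 0) = true := by rwa [← h]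
        have h3 : sh 1 (su (b k) x) 0 = 0 := su_1 hf
        have h4 : sh 1 (su (b k) y) 0 = 0 := su_1 hfy
        have h5 := ih (h3.trans h4.symm)
        rw [h3, ← e1, ← e2] at h5
        simp only [hf, if_true] at hi
        have h6 := h5 (i - len b k (hd (b k) (x 0))) (by omega)
        simp only [sh] at h6
        rwa [Nat.sub_add_cancel (by omega)] at h6
      · simp [hf] at hi; omega

theorem len_ge (b : ℕ → Bool) (hinf : ∀ K, ∃ k, K ≤ k ∧ b k = false) (N : ℕ) :
    ∃ k, N ≤ len b k 2 := by
  have mono : ∀ k j, len b k 2 ≤ len b (k + j) 2 := by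
    intro k j
    induction j with
    | zero => simp
    | succ j ih =>
      refine ih.trans ?_
      rw [← Nat.add_assoc]
      simp only [len, hd_two]; omega
  induction N with
  | zero => exact ⟨0, Nat.zero_le _⟩
  | succ N ih =>
    obtain ⟨k, hk⟩ := ih
    obtain ⟨k', hk', hb⟩ := hinf k
    refine ⟨k' + 1, ?_⟩
    obtain ⟨j, rfl⟩ := Nat.exists_eq_add_of_le hk'
    have h1 := mono k j
    have h2 := len_pos b (k + j) 0
    have h3 : fl (b (k + j)) 2 = true := by rw [hb]; decide
    simp only [len, hd_two, h3, if_true]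
    omega

theorem agree_su {b : Bool} {N : ℕ} {x y : Seq3} (h : agree N x y) :
    agree N (su b x) (su b y) := by
  induction N using Nat.strong_induction_on generalizing x y with
  | _ N ih =>
    intro i hi
    have h0 : x 0 = y 0 := h 0 (by omega)
    by_cases hlt : i < bl b (x 0)
    · exact agree_su1 h0 i hlt
    · have h1 := sh_su1 b x
      have h2 := sh_su1 b y
      rw [← h0] at h2
      have hb := bl_pos b (x 0)
      have h3 := ih (N - 1) (by omega) (x := sh 1 x) (y := sh 1 y)
        (fun i hi => h (i + 1) (by omega))
      rw [← h1, ← h2] at h3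
      have h4 := h3 (i - bl b (x 0)) (by omega)
      simp only [sh] at h4
      rwa [Nat.sub_add_cancel (by omega)] at h4

theorem agree_Phi {b : ℕ → Bool} (k : ℕ) {N : ℕ} {x y : Seq3} (h : agree N x y) :
    agree N (Phi b k x) (Phi b k y) := by
  induction k generalizing x y with
  | zero => exact h
  | succ k ih => exact ih (agree_su h)

/-! ### Counting -/

def cnt (s : Seq3) (i : Fin 3) : ℕ → ℤ
  | 0 => 0
  | r + 1 => cnt s i r + if s r = i then 1 else 0

theorem birk_cnt (s : Seq3) (r : ℕ) (i : Fin 3) : birk s r i = (cnt s i r : ℝ) := by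
  induction r with
  | zero => simp [birk, cnt]
  | succ r ih =>
    simp only [birk] at ih ⊢
    rw [Finset.sum_range_succ, Pi.add_apply, ih, shift_iter]
    simp only [kappa, sh, cnt, Nat.zero_add]
    by_cases h : s r = i
    · simp [h]
    · simp [h, Ne.symm h]

theorem cnt_sum (s : Seq3) (r : ℕ) : cnt s 0 r + cnt s 1 r + cnt s 2 r = r := by
  induction r with
  | zero => simp [cnt]
  | succ r ih =>
    simp only [cnt]
    push_cast
    rw [← ih]
    have : ∀ c : Fin 3, c = 0 ∨ c = 1 ∨ c = 2 := by decide
    rcases this (s r) with h | h | h <;> simp [h] <;> ring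

theorem cnt_nonneg (s : Seq3) (i : Fin 3) (r : ℕ) : 0 ≤ cnt s i r := by
  induction r with
  | zero => simp [cnt]
  | succ r ih => simp only [cnt]; split_ifs <;> omega

theorem cnt_le (s : Seq3) (i : Fin 3) (r : ℕ) : cnt s i r ≤ r := by
  induction r with
  | zero => simp [cnt]
  | succ r ih => simp only [cnt]; push_cast; split_ifs <;> omega

theorem cnt_sh (s : Seq3) (i : Fin 3) (p r : ℕ) :
    cnt (sh p s) i r = cnt s i (p + r) - cnt s i p := by
  induction r with
  | zero => simp [cnt]
  | succ r ih =>
    rw [← Nat.add_assoc]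
    simp only [cnt]
    rw [ih]
    simp only [sh, Nat.add_comm r p]
    ring

def cross (s : Seq3) (V : Fin 3 → ℝ) (i l : Fin 3) (r : ℕ) : ℝ :=
  (cnt s i r : ℝ) * V l - (cnt s l r : ℝ) * V i

def Dev (ε : ℝ) (s : Seq3) (V : Fin 3 → ℝ) : Prop :=
  ∃ C : ℝ, 0 ≤ C ∧ ∀ (r : ℕ) (i l : Fin 3), |cross s V i l r| ≤ ε * r + C

def D (s : Seq3) (V : Fin 3 → ℝ) : Prop := ∀ ε : ℝ, 0 < ε → Dev ε s V

theorem Dev.toD {s : Seq3} {V : Fin 3 → ℝ} (h : Dev 0 s V) : D s V := by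
  intro ε hε
  obtain ⟨C, hC, h⟩ := h
  refine ⟨C, hC, fun r i l => (h r i l).trans ?_⟩
  have : 0 ≤ ε * r := by positivity
  linarith

def Sm (V : Fin 3 → ℝ) : ℝ := V 0 + V 1 + V 2

theorem Dev_S {ε C : ℝ} {s : Seq3} {V : Fin 3 → ℝ}
    (h : ∀ (r : ℕ) (i l : Fin 3), |cross s V i l r| ≤ ε * r + C) (r : ℕ) (i : Fin 3) :
    |Sm V * cnt s i r - r * V i| ≤ 3 * (ε * r + C) := by
  have e : Sm V * cnt s i r - r * V i = cross s V i 0 r + cross s V i 1 r + cross s V i 2 r := by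
    have hs : (r : ℝ) = cnt s 0 r + cnt s 1 r + cnt s 2 r := by exact_mod_cast (cnt_sum s r).symm
    rw [hs]
    simp only [Sm, cross]; ring
  rw [e]
  have h0 := abs_le.1 (h r i 0)
  have h1 := abs_le.1 (h r i 1)
  have h2 := abs_le.1 (h r i 2)
  rw [abs_le]
  constructor <;> linarith [h0.1, h0.2, h1.1, h1.2, h2.1, h2.2]

theorem D_S {s : Seq3} {V : Fin 3 → ℝ} (h : D s V) (ε : ℝ) (hε : 0 < ε) :
    ∃ C : ℝ, 0 ≤ C ∧ ∀ (r : ℕ) (i : Fin 3), |Sm V * cnt s i r - r * V i| ≤ ε * r + C := by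
  obtain ⟨C, hC, h⟩ := h (ε / 3) (by positivity)
  refine ⟨3 * C, by positivity, fun r i => (Dev_S h r i).trans (le_of_eq ?_)⟩
  ring

theorem little_of_tendsto {f : ℕ → ℝ} (h : Tendsto (fun r : ℕ => (r : ℝ)⁻¹ * f r) atTop (nhds 0))
    (ε : ℝ) (hε : 0 < ε) : ∃ C : ℝ, 0 ≤ C ∧ ∀ r : ℕ, |f r| ≤ ε * r + C := by
  rw [Metric.tendsto_atTop] at h
  obtain ⟨R, hR⟩ := h ε hε
  refine ⟨∑ r ∈ Finset.range (R + 1), |f r|, Finset.sum_nonneg fun _ _ => abs_nonneg _, fun r => ?_⟩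
  by_cases hr : r < R + 1
  · have : |f r| ≤ ∑ r ∈ Finset.range (R + 1), |f r| :=
      Finset.single_le_sum (f := fun r => |f r|) (fun _ _ => abs_nonneg _) (Finset.mem_range.2 hr)
    have h2 : 0 ≤ ε * r := by positivity
    linarith
  · have h1 := hR r (by omega)
    have hr0 : (0 : ℝ) < r := by
      have : 0 < r := by omega
      exact_mod_cast this
    rw [Real.dist_eq, sub_zero, abs_mul, abs_inv, abs_of_pos hr0, inv_mul_lt_iff₀ hr0] at h1
    have h3 : 0 ≤ ∑ r ∈ Finset.range (R + 1), |f r| := Finset.sum_nonneg fun _ _ => abs_nonneg _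
    nlinarith

theorem tendsto_of_little {f : ℕ → ℝ}
    (h : ∀ ε : ℝ, 0 < ε → ∃ C : ℝ, 0 ≤ C ∧ ∀ r : ℕ, |f r| ≤ ε * r + C) :
    Tendsto (fun r : ℕ => (r : ℝ)⁻¹ * f r) atTop (nhds 0) := by
  rw [Metric.tendsto_atTop]
  intro ε hε
  obtain ⟨C, hC, hf⟩ := h (ε / 2) (by positivity)
  obtain ⟨R, hR⟩ := exists_nat_gt (2 * C / ε)
  refine ⟨R + 1, fun r hr => ?_⟩
  have hr0 : (0 : ℝ) < r := by
    have : 0 < r := by omega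
    exact_mod_cast this
  have hrR : (R : ℝ) < r := by
    have : R < r := by omega
    exact_mod_cast this
  rw [Real.dist_eq, sub_zero, abs_mul, abs_inv, abs_of_pos hr0, inv_mul_lt_iff₀ hr0]
  have h1 := hf r
  have h2 : 2 * C < ε * r := by
    rw [div_lt_iff₀ hε] at hR
    nlinarith
  nlinarith

theorem freq_coord {s : Seq3} {v : Fin 3 → ℝ} (h : hasFreq s v) (i : Fin 3) :
    Tendsto (fun r : ℕ => (r : ℝ)⁻¹ * (cnt s i r : ℝ)) atTop (nhds (v i)) := by
  have h1 := (tendsto_pi_nhds.1 h) i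
  simpa [birk_cnt] using h1

theorem D_of_freq {s : Seq3} {v : Fin 3 → ℝ} (h : hasFreq s v) : D s v := by
  intro ε hε
  have h1 : ∀ i l, ∃ C : ℝ, 0 ≤ C ∧ ∀ r : ℕ, |cross s v i l r| ≤ ε * r + C := by
    intro i l
    refine little_of_tendsto ?_ ε hε
    have h2 := ((freq_coord h i).mul_const (v l)).sub ((freq_coord h l).mul_const (v i))
    have h3 : v i * v l - v l * v i = 0 := by ring
    rw [h3] at h2
    refine h2.congr fun r => ?_
    simp only [cross]; ring
  choose C hC0 hC using h1
  refine ⟨∑ i, ∑ l, C i l, Finset.sum_nonneg fun i _ => Finset.sum_nonneg fun l _ => hC0 i l,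
    fun r i l => (hC i l r).trans ?_⟩
  have a1 : C i l ≤ ∑ l, C i l :=
    Finset.single_le_sum (f := fun l => C i l) (fun l _ => hC0 i l) (Finset.mem_univ l)
  have a2 : ∑ l, C i l ≤ ∑ i, ∑ l, C i l :=
    Finset.single_le_sum (f := fun i => ∑ l, C i l)
      (fun i _ => Finset.sum_nonneg fun l _ => hC0 i l) (Finset.mem_univ i)
  linarith

theorem freq_of_D {s : Seq3} {v : Fin 3 → ℝ} (hv : Sm v = 1) (h : D s v) : hasFreq s v := by
  unfold hasFreq
  rw [tendsto_pi_nhds]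
  intro i
  have h1 : Tendsto (fun r : ℕ => (r : ℝ)⁻¹ * ((cnt s i r : ℝ) - r * v i)) atTop (nhds 0) := by
    refine tendsto_of_little fun ε hε => ?_
    obtain ⟨C, hC, hh⟩ := D_S h ε hε
    refine ⟨C, hC, fun r => ?_⟩
    have := hh r i
    rwa [hv, one_mul] at this
  have h2 := h1.add_const (v i)
  rw [zero_add] at h2
  refine h2.congr' ?_
  filter_upwards [eventually_gt_atTop 0] with r hr
  have hr0 : (r : ℝ) ≠ 0 := by positivity
  simp only [Pi.smul_apply, birk_cnt, smul_eq_mul]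
  field_simp
  ring

theorem freq_sum {s : Seq3} {v : Fin 3 → ℝ} (h : hasFreq s v) : Sm v = 1 ∧ ∀ i, 0 ≤ v i := by
  constructor
  · have h1 := ((freq_coord h 0).add (freq_coord h 1)).add (freq_coord h 2)
    refine tendsto_nhds_unique h1 ?_
    refine tendsto_const_nhds.congr' ?_
    filter_upwards [eventually_gt_atTop 0] with r hr
    have hr0 : (r : ℝ) ≠ 0 := by positivity
    have hs : (r : ℝ) = cnt s 0 r + cnt s 1 r + cnt s 2 r := by exact_mod_cast (cnt_sum s r).symm
    rw [← mul_add, ← mul_add, ← hs, inv_mul_cancel₀ hr0]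
  · intro i
    refine ge_of_tendsto' (freq_coord h i) fun r => ?_
    have := cnt_nonneg s i r
    have : (0 : ℝ) ≤ cnt s i r := by exact_mod_cast this
    positivity

def nrm (V : Fin 3 → ℝ) : ℝ := |V 0| + |V 1| + |V 2| + 1

theorem nrm_pos (V : Fin 3 → ℝ) : 0 < nrm V := by unfold nrm; positivity

theorem le_nrm (V : Fin 3 → ℝ) (i : Fin 3) : |V i| ≤ nrm V := by
  unfold nrm
  have h0 := abs_nonneg (V 0)
  have h1 := abs_nonneg (V 1)
  have h2 := abs_nonneg (V 2)
  fin_cases i <;> simp <;> linarith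

theorem cross_of_S {s : Seq3} {V : Fin 3 → ℝ} {S t δ : ℝ} (hS : 0 < S) (r : ℕ)
    (h : ∀ i, |S * cnt s i r - t * V i| ≤ δ) (i l : Fin 3) :
    |cross s V i l r| ≤ 2 * nrm V / S * δ := by
  have e : S * cross s V i l r =
      (S * cnt s i r - t * V i) * V l - (S * cnt s l r - t * V l) * V i := by
    simp only [cross]; ring
  have h1 : |S * cross s V i l r| ≤ δ * nrm V + δ * nrm V := by
    rw [e]
    refine (abs_sub _ _).trans ?_
    rw [abs_mul, abs_mul]
    have hδ : 0 ≤ δ := (abs_nonneg _).trans (h i)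
    gcongr
    · exact h i
    · exact le_nrm V l
    · exact h l
    · exact le_nrm V i
  rw [abs_mul, abs_of_pos hS] at h1
  rw [div_mul_eq_mul_div, le_div_iff₀ hS]
  linarith

theorem D_of_samples {s : Seq3} {V : Fin 3 → ℝ} {S K C₀ : ℝ} (q : ℕ → ℕ) (hS : 0 < S)
    (hK : 0 < K) (hC₀ : 0 ≤ C₀) (hq : ∀ j : ℕ, (q j : ℝ) ≤ K * j + C₀)
    (h : ∀ ε : ℝ, 0 < ε → ∃ C : ℝ, 0 ≤ C ∧ ∀ (j : ℕ) (i : Fin 3),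
      |S * cnt s i j - q j * V i| ≤ ε * q j + C) : D s V := by
  intro ε hε
  have hn := nrm_pos V
  obtain ⟨C, hC, hh⟩ := h (ε * S / (2 * nrm V * K)) (by positivity)
  refine ⟨2 * nrm V / S * (ε * S / (2 * nrm V * K) * C₀ + C), by positivity, fun r i l => ?_⟩
  refine (cross_of_S hS r (hh r) i l).trans ?_
  have h1 : ε * S / (2 * nrm V * K) * q r ≤ ε * S / (2 * nrm V * K) * (K * r + C₀) :=
    mul_le_mul_of_nonneg_left (hq r) (by positivity)
  have h2 : 2 * nrm V / S * (ε * S / (2 * nrm V * K) * q r + C) ≤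
      2 * nrm V / S * (ε * S / (2 * nrm V * K) * (K * r + C₀) + C) := by
    gcongr
  refine h2.trans (le_of_eq ?_)
  field_simp
  ring

/-! ### Transport under substitution -/

def T (b : Bool) (V : Fin 3 → ℝ) : Fin 3 → ℝ :=
  if b then ![V 1, V 0, V 2 - V 0] else ![V 0 - V 2, V 1, V 2]

theorem T_true (V : Fin 3 → ℝ) : T true V = ![V 1, V 0, V 2 - V 0] := rfl
theorem T_false (V : Fin 3 → ℝ) : T false V = ![V 0 - V 2, V 1, V 2] := rfl

theorem cnt_succ (s : Seq3) (i : Fin 3) (r : ℕ) :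
    cnt s i (r + 1) = cnt s i r + if s r = i then 1 else 0 := rfl

theorem su_at_pos (b : Bool) (x : Seq3) (j : ℕ) : su b x (pos b x j) = hd b (x j) := by
  have h := congrFun (sh_pos b x j) 0
  rw [su_0] at h
  simpa [sh] using h

theorem su_at_pos1 {b : Bool} {x : Seq3} {j : ℕ} (hf : fl b (x j) = true) :
    su b x (pos b x j + 1) = 0 := by
  have h := congrFun (sh_pos b x j) 1
  rw [su_1 (by simpa [sh] using hf)] at h
  simpa [sh, Nat.add_comm] using h

theorem cnt_block (b : Bool) (x : Seq3) (i : Fin 3) (j : ℕ) :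
    cnt (su b x) i (pos b x (j + 1)) = cnt (su b x) i (pos b x j) +
      (if hd b (x j) = i then 1 else 0) + (if fl b (x j) = true ∧ i = 0 then 1 else 0) := by
  simp only [pos]
  by_cases hf : fl b (x j) = true
  · simp only [bl, hf, if_true, true_and]
    rw [show pos b x j + 2 = (pos b x j + 1) + 1 from rfl, cnt_succ, cnt_succ, su_at_pos,
      su_at_pos1 hf]
    simp only [eq_comm]
  · simp only [bl, hf]
    simp [cnt_succ, su_at_pos]

theorem cnt_pos_false (x : Seq3) (j : ℕ) :
    cnt (su false x) 0 (pos false x j) = cnt x 0 j + cnt x 2 j ∧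
    cnt (su false x) 1 (pos false x j) = cnt x 1 j ∧
    cnt (su false x) 2 (pos false x j) = cnt x 2 j := by
  induction j with
  | zero => simp [pos, cnt]
  | succ j ih =>
    obtain ⟨h0, h1, h2⟩ := ih
    have : ∀ c : Fin 3, c = 0 ∨ c = 1 ∨ c = 2 := by decide
    rw [cnt_block, cnt_block, cnt_block, h0, h1, h2, cnt_succ, cnt_succ, cnt_succ]
    rcases this (x j) with h | h | h <;> simp [h, hd, fl] <;> ring

theorem cnt_pos_true (x : Seq3) (j : ℕ) :
    cnt (su true x) 0 (pos true x j) = cnt x 1 j ∧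
    cnt (su true x) 1 (pos true x j) = cnt x 0 j ∧
    cnt (su true x) 2 (pos true x j) = cnt x 1 j + cnt x 2 j := by
  induction j with
  | zero => simp [pos, cnt]
  | succ j ih =>
    obtain ⟨h0, h1, h2⟩ := ih
    have : ∀ c : Fin 3, c = 0 ∨ c = 1 ∨ c = 2 := by decide
    rw [cnt_block, cnt_block, cnt_block, h0, h1, h2, cnt_succ, cnt_succ, cnt_succ]
    rcases this (x j) with h | h | h <;> simp [h, hd, fl] <;> ring

theorem Dev_su {b : Bool} {ε : ℝ} (hε : 0 ≤ ε) {x : Seq3} {V : Fin 3 → ℝ}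
    (h : Dev ε x (T b V)) : Dev (2 * ε) (su b x) V := by
  obtain ⟨C, hC, h⟩ := h
  have hn := nrm_pos V
  have key : ∀ (j : ℕ) (i l : Fin 3), |cross (su b x) V i l (pos b x j)| ≤ 2 * (ε * j + C) := by
    intro j i l
    have h01 := abs_le.1 (h j 0 1)
    have h02 := abs_le.1 (h j 0 2)
    have h12 := abs_le.1 (h j 1 2)
    have hp : 0 ≤ ε * j := by positivity
    rw [abs_le]
    cases b
    · obtain ⟨c0, c1, c2⟩ := cnt_pos_false x j
      simp only [cross, T_false] at h01 h02 h12
      simp at h01 h02 h12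
      fin_cases i <;> fin_cases l <;> simp [cross, c0, c1, c2] <;>
        first | linarith | (constructor <;> linarith)
    · obtain ⟨c0, c1, c2⟩ := cnt_pos_true x j
      simp only [cross, T_true] at h01 h02 h12
      simp at h01 h02 h12
      fin_cases i <;> fin_cases l <;> simp [cross, c0, c1, c2] <;>
        first | linarith | (constructor <;> linarith)
  refine ⟨2 * C + 2 * nrm V, by positivity, fun r i l => ?_⟩
  obtain ⟨j, hj⟩ := pos_cover b x r
  have hk := key j i l
  have hjr : (j : ℝ) ≤ r := by
    have h1 := le_pos b x j
    have : j ≤ r := by rcases hj with hj | ⟨hj, -⟩ <;> omega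
    exact_mod_cast this
  have hjr' : ε * j ≤ ε * r := mul_le_mul_of_nonneg_left hjr hε
  rcases hj with hj | ⟨hj, -⟩
  · rw [hj] at hjr' ⊢
    linarith
  · rw [hj] at hjr' ⊢
    have e : cross (su b x) V i l (pos b x j + 1) = cross (su b x) V i l (pos b x j) +
        ((if su b x (pos b x j) = i then V l else 0) -
          (if su b x (pos b x j) = l then V i else 0)) := by
      simp only [cross, cnt_succ]
      push_cast
      split_ifs <;> ring
    have e2 : |(if su b x (pos b x j) = i then V l else 0) -
          (if su b x (pos b x j) = l then V i else 0)| ≤ nrm V + nrm V := by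
      refine (abs_sub _ _).trans (add_le_add ?_ ?_)
      · split_ifs
        · exact le_nrm V l
        · simpa using hn.le
      · split_ifs
        · exact le_nrm V i
        · simpa using hn.le
    rw [e]
    refine (abs_add_le _ _).trans ?_
    linarith

theorem D_su {b : Bool} {x : Seq3} {V : Fin 3 → ℝ} (h : D x (T b V)) : D (su b x) V := by
  intro ε hε
  have := Dev_su (by positivity) (h (ε / 2) (by positivity))
  rwa [mul_div_cancel₀ _ (two_ne_zero)] at this

theorem Dev0_su {b : Bool} {x : Seq3} {V : Fin 3 → ℝ} (h : Dev 0 x (T b V)) :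
    Dev 0 (su b x) V := by
  have := Dev_su le_rfl h
  rwa [mul_zero] at this

def VT (b : ℕ → Bool) (V : Fin 3 → ℝ) : ℕ → Fin 3 → ℝ
  | 0 => V
  | k + 1 => T (b k) (VT b V k)

theorem D_Phi {b : ℕ → Bool} {V : Fin 3 → ℝ} (k : ℕ) {x : Seq3} (h : D x (VT b V k)) :
    D (Phi b k x) V := by
  induction k generalizing x with
  | zero => exact h
  | succ k ih => exact ih (D_su h)

theorem Dev0_Phi {b : ℕ → Bool} {V : Fin 3 → ℝ} (k : ℕ) {x : Seq3} (h : Dev 0 x (VT b V k)) :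
    Dev 0 (Phi b k x) V := by
  induction k generalizing x with
  | zero => exact h
  | succ k ih => exact ih (Dev0_su h)
/-! ### Balanced sequences -/

noncomputable def pick (d : Fin 3 → ℝ) : Fin 3 := if 0 < d 0 then 0 else if 0 < d 1 then 1 else 2

noncomputable def balD (V : Fin 3 → ℝ) : ℕ → Fin 3 → ℝ
  | 0 => fun _ => 0
  | r + 1 => fun i => balD V r i + V i - if pick (fun i => balD V r i + V i) = i then Sm V else 0

noncomputable def bal (V : Fin 3 → ℝ) : Seq3 := fun r => pick (fun i => balD V r i + V i)

theorem balD_eq (V : Fin 3 → ℝ) (r : ℕ) (i : Fin 3) :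
    balD V r i = r * V i - Sm V * cnt (bal V) i r := by
  induction r with
  | zero => simp [balD, cnt]
  | succ r ih =>
    simp only [balD, cnt_succ]
    rw [ih]
    have : bal V r = pick (fun i => balD V r i + V i) := rfl
    rw [this]
    push_cast
    split_ifs <;> ring

theorem balD_sum (V : Fin 3 → ℝ) (r : ℕ) : balD V r 0 + balD V r 1 + balD V r 2 = 0 := by
  rw [balD_eq, balD_eq, balD_eq]
  have hs : (r : ℝ) = cnt (bal V) 0 r + cnt (bal V) 1 r + cnt (bal V) 2 r := by
    exact_mod_cast (cnt_sum (bal V) r).symm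
  generalize (cnt (bal V) 0 r : ℝ) = a at *
  generalize (cnt (bal V) 1 r : ℝ) = b at *
  generalize (cnt (bal V) 2 r : ℝ) = c at *
  rw [hs]
  simp only [Sm]; ring

theorem pick_pos {d : Fin 3 → ℝ} (h : 0 < d 0 + d 1 + d 2) : 0 < d (pick d) := by
  unfold pick
  split_ifs with h1 h2
  · exact h1
  · exact h2
  · linarith

theorem balD_ge {V : Fin 3 → ℝ} (hV : ∀ i, 0 ≤ V i) (hS : 0 < Sm V) (r : ℕ) (i : Fin 3) :
    -Sm V ≤ balD V r i := by
  induction r generalizing i with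
  | zero => simp [balD]; exact hS.le
  | succ r ih =>
    have h1 := pick_pos (d := fun i => balD V r i + V i) (by
      have := balD_sum V r
      simp only [Sm] at hS
      linarith)
    simp only [balD]
    split_ifs with h
    · rw [h] at h1; linarith
    · linarith [ih i, hV i]

theorem bal_dev {V : Fin 3 → ℝ} (hV : ∀ i, 0 ≤ V i) (hS : 0 < Sm V) : Dev 0 (bal V) V := by
  have hn := nrm_pos V
  refine ⟨2 * nrm V / Sm V * (2 * Sm V), by positivity, fun r i l => ?_⟩
  rw [zero_mul, zero_add]
  refine cross_of_S (t := r) hS r (fun i => ?_) i l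
  have h := fun i => balD_ge hV hS r i
  have hs := balD_sum V r
  rw [abs_sub_comm, ← balD_eq, abs_le]
  constructor
  · linarith [h i]
  · have h0 := h 0
    have h1 := h 1
    have h2 := h 2
    fin_cases i <;> simp <;> linarith

/-! ### Maximal sequences with a given direction -/

theorem Dev_of_sh {s : Seq3} {V : Fin 3 → ℝ} (p : ℕ) (h : Dev 0 (sh p s) V) : Dev 0 s V := by
  obtain ⟨C, hC, h⟩ := h
  have hn := nrm_pos V
  have triv : ∀ (r : ℕ), r ≤ p → ∀ i l, |cross s V i l r| ≤ 2 * p * nrm V := by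
    intro r hr i l
    have hc : ∀ i, |(cnt s i r : ℝ)| ≤ p := by
      intro i
      have h1 := cnt_nonneg s i r
      have h2 := cnt_le s i r
      have h3 : (cnt s i r) ≤ (p : ℤ) := by omega
      rw [abs_of_nonneg (by exact_mod_cast h1)]
      exact_mod_cast h3
    have : |cross s V i l r| ≤ p * nrm V + p * nrm V := by
      unfold cross
      refine (abs_sub _ _).trans ?_
      rw [abs_mul, abs_mul]
      gcongr
      · exact hc i
      · exact le_nrm V l
      · exact hc l
      · exact le_nrm V i
    linarith
  refine ⟨C + 2 * p * nrm V, by positivity, fun r i l => ?_⟩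
  by_cases hr : r ≤ p
  · have := triv r hr i l
    linarith
  · obtain ⟨q, rfl⟩ := Nat.exists_eq_add_of_le (le_of_not_ge hr)
    have e : cross s V i l (p + q) = cross (sh p s) V i l q + cross s V i l p := by
      simp only [cross, cnt_sh]
      push_cast
      ring
    rw [e]
    have h1 := h q i l
    have h2 := triv p le_rfl i l
    refine (abs_add_le _ _).trans ?_
    linarith

def two : Seq3 := fun _ => 2

theorem two_max : two ∈ MaxSet := by
  rw [mem_max]
  exact ⟨rfl, fun r => Or.inl rfl⟩

theorem le_two (s : Seq3) : lexLe s two := by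
  apply lexLe_of_not
  rintro ⟨n, -, h⟩
  have : ∀ c : Fin 3, ¬ (2 < c) := by decide
  exact this _ h

theorem cnt_two (r : ℕ) : cnt two 0 r = 0 ∧ cnt two 1 r = 0 := by
  induction r with
  | zero => simp [cnt]
  | succ r ih => simp [cnt_succ, ih, two]

theorem two_dev {V : Fin 3 → ℝ} (h0 : V 0 = 0) (h1 : V 1 = 0) : Dev 0 two V := by
  refine ⟨0, le_rfl, fun r i l => ?_⟩
  obtain ⟨c0, c1⟩ := cnt_two r
  unfold cross
  fin_cases i <;> fin_cases l <;> simp [h0, h1, c0, c1]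

theorem run_cnt {s : Seq3} {t N : ℕ} (h : ∀ i, i < N → s (t + i) = 2) (l : Fin 3) :
    cnt s l (t + N) = cnt s l t + if l = 2 then (N : ℤ) else 0 := by
  induction N with
  | zero => simp
  | succ N ih =>
    rw [← Nat.add_assoc, cnt_succ, ih fun i hi => h i (by omega), h N (by omega)]
    by_cases hl : l = 2
    · simp [hl]; ring
    · simp [hl, Ne.symm hl]

theorem exists_max {V : Fin 3 → ℝ} (hV : ∀ i, 0 ≤ V i) (h2 : 0 < V 2) :
    ∃ m ∈ MaxSet, D m V := by
  by_cases h01 : V 0 = 0 ∧ V 1 = 0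
  · exact ⟨two, two_max, (two_dev h01.1 h01.2).toD⟩
  · obtain ⟨l, hl2, hl⟩ : ∃ l : Fin 3, l ≠ 2 ∧ 0 < V l := by
      by_contra hc
      push Not at hc
      exact h01 ⟨le_antisymm (hc 0 (by decide)) (hV 0), le_antisymm (hc 1 (by decide)) (hV 1)⟩
    have hS : 0 < Sm V := by
      unfold Sm; linarith [hV 0, hV 1]
    obtain ⟨C, hC, hdev⟩ := bal_dev hV hS
    obtain ⟨N, hN⟩ := exists_nat_gt (2 * C / V l)
    have hrun : ∀ t, ∃ i, i < N ∧ bal V (t + i) ≠ 2 := by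
      intro t
      by_contra hc
      push Not at hc
      have a := run_cnt hc
      have e : cross (bal V) V 2 l (t + N) = cross (bal V) V 2 l t + N * V l := by
        simp only [cross, a, if_neg hl2, if_true]
        push_cast
        ring
      have d1 := abs_le.1 (hdev (t + N) 2 l)
      have d2 := abs_le.1 (hdev t 2 l)
      rw [div_lt_iff₀ hl] at hN
      rw [e] at d1
      linarith [d1.2, d2.1]
    set m : Seq3 := fun t => if t < N then 2 else if t = N then 0 else bal V (t - (N + 1)) with hm
    have hm1 : sh (N + 1) m = bal V := by
      funext t
      simp only [sh, hm]
      rw [if_neg (by omega), if_neg (by omega)]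
      congr 1
      omega
    have hmlt : ∀ t, t < N → m t = 2 := fun t ht => by simp only [hm]; rw [if_pos ht]
    have hmN : m N = 0 := by simp [hm]
    have hNpos : 0 < N := by
      obtain ⟨i, hi, -⟩ := hrun 0
      omega
    have lt2 : ∀ c : Fin 3, c ≠ 2 → c < 2 := by decide
    have hlt : ∀ r, (∃ i, i < N ∧ m (i + r) ≠ 2) → lexLe (sh r m) m := by
      intro r hr
      apply lexLt.le
      classical
      refine ⟨Nat.find hr, fun i hi => ?_, ?_⟩
      · have := Nat.find_min hr hi
        have hN' := (Nat.find_spec hr).1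
        push Not at this
        rw [hmlt i (by omega)]
        exact this (by omega)
      · rw [hmlt _ (Nat.find_spec hr).1]
        exact lt2 _ (Nat.find_spec hr).2
    refine ⟨m, ?_, (Dev_of_sh (N + 1) (by rw [hm1]; exact bal_dev hV hS)).toD⟩
    rw [mem_max]
    refine ⟨hmlt 0 hNpos, fun r => ?_⟩
    rcases Nat.eq_zero_or_pos r with rfl | hr
    · exact lexLe_refl _
    · apply hlt
      by_cases hrN : r ≤ N
      · refine ⟨N - r, by omega, ?_⟩
        rw [Nat.sub_add_cancel hrN, hmN]; decide
      · obtain ⟨i, hi, hne⟩ := hrun (r - (N + 1))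
        refine ⟨i, hi, ?_⟩
        have : m (i + r) = bal V (r - (N + 1) + i) := by
          rw [← hm1]
          simp only [sh]
          congr 1
          omega
        rw [this]; exact hne

/-! ### Minimal sets -/

theorem cnt_cont (i : Fin 3) (r : ℕ) : Continuous fun s : Seq3 => cnt s i r := by
  induction r with
  | zero => exact continuous_const
  | succ r ih =>
    simp only [cnt_succ]
    refine ih.add ?_
    exact (continuous_of_discreteTopology (f := fun c : Fin 3 => if c = i then (1 : ℤ) else 0)).comp
      (continuous_apply r)

theorem sh_cont (r : ℕ) : Continuous (sh r) := by
  unfold sh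
  fun_prop

theorem closed_le (w : Seq3) : IsClosed {s : Seq3 | lexLe s w} := by
  rw [← isOpen_compl_iff]
  have : {s : Seq3 | lexLe s w}ᶜ = ⋃ n, ((⋂ i ∈ Finset.range n, {s : Seq3 | w i = s i}) ∩
      {s : Seq3 | w n < s n}) := by
    ext s
    simp only [Set.mem_compl_iff, Set.mem_iUnion, Set.mem_inter_iff, Set.mem_iInter,
      Finset.mem_range]
    constructor
    · intro h
      by_contra hc
      exact h (lexLe_of_not fun h' => hc h')
    · intro h h'
      exact not_lexLt h' h
  rw [this]
  refine isOpen_iUnion fun n => IsOpen.inter ?_ ?_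
  · refine isOpen_biInter_finset fun i _ => ?_
    exact (isOpen_discrete {c : Fin 3 | w i = c}).preimage
      (continuous_apply i : Continuous fun s : Seq3 => s i)
  · exact (isOpen_discrete {c : Fin 3 | w n < c}).preimage
      (continuous_apply n : Continuous fun s : Seq3 => s n)

theorem exists_minimal (F : Set Seq3) (hne : F.Nonempty) (hcl : IsClosed F)
    (hinv : Set.MapsTo shift F F) : ∃ Y ⊆ F, IsMinimalSet shift Y := by
  have hshc : Continuous shift := sh_cont 1
  let 𝒮 : Set (Set Seq3) := {Y | Y ⊆ F ∧ Y.Nonempty ∧ IsClosed Y ∧ Set.MapsTo shift Y Y}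
  obtain ⟨Y, hY⟩ : ∃ Y, Minimal (· ∈ 𝒮) Y := by
    refine zorn_superset 𝒮 ?_
    intro c hc hchain
    by_cases hce : c.Nonempty
    · refine ⟨⋂₀ c, ⟨?_, ?_, ?_, ?_⟩, fun s hs => Set.sInter_subset_of_mem hs⟩
      · obtain ⟨s, hs⟩ := hce
        exact (Set.sInter_subset_of_mem hs).trans (hc hs).1
      · have := hce.to_subtype
        refine IsCompact.nonempty_sInter_of_directed_nonempty_isCompact_isClosed ?_ ?_ ?_ ?_
        · intro a ha b hb
          rcases hchain.total ha hb with h | h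
          · exact ⟨a, ha, subset_rfl, h⟩
          · exact ⟨b, hb, h, subset_rfl⟩
        · exact fun s hs => (hc hs).2.1
        · exact fun s hs => (hc hs).2.2.1.isCompact
        · exact fun s hs => (hc hs).2.2.1
      · exact isClosed_sInter fun s hs => (hc hs).2.2.1
      · intro x hx s hs
        exact (hc hs).2.2.2 (hx s hs)
    · refine ⟨F, ⟨subset_rfl, hne, hcl, hinv⟩, fun s hs => absurd ⟨s, hs⟩ hce⟩
  obtain ⟨⟨h1, h2, h3, h4⟩, hmin⟩ := hY
  refine ⟨Y, h1, h2, h3.isCompact, h4, fun x hx => ?_⟩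
  have hsub : closure {y | ∃ n : ℕ, shift^[n] x = y} ⊆ Y := by
    refine closure_minimal ?_ h3
    rintro y ⟨n, rfl⟩
    exact h4.iterate n hx
  refine hmin ⟨hsub.trans h1, ⟨x, subset_closure ⟨0, rfl⟩⟩, isClosed_closure, ?_⟩ hsub
  refine Set.MapsTo.closure ?_ hshc
  rintro y ⟨n, rfl⟩
  exact ⟨n + 1, by rw [Function.iterate_succ_apply']⟩

theorem goober {w g : Seq3} {v : Fin 3 → ℝ} (hv : Sm v = 1) (hg : g ∈ BetaShift w)
    (hd : Dev 0 g v) :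
    ∃ Y : Set Seq3, IsMinimalSet shift Y ∧ Y ⊆ BetaShift w ∧
      (∃ M : ℝ, 0 < M ∧ ∀ s ∈ Y, ∀ r : ℕ, ‖birk s r - (r : ℝ) • v‖ < M) ∧
      ∀ s ∈ Y, hasFreq s v := by
  obtain ⟨C, hC, hd⟩ := hd
  let F : Set Seq3 := {s | ∀ p, lexLe (sh p s) w ∧
    ∀ (r : ℕ) (i l : Fin 3), |cross (sh p s) v i l r| ≤ 2 * C}
  have hF : IsClosed F := by
    have : F = ⋂ p, sh p ⁻¹' ({s | lexLe s w} ∩ ⋂ r, ⋂ i, ⋂ l,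
        {s | |cross s v i l r| ≤ 2 * C}) := by
      ext s
      simp [F]
    rw [this]
    refine isClosed_iInter fun p => IsClosed.preimage (sh_cont p) ?_
    refine (closed_le w).inter ?_
    refine isClosed_iInter fun r => isClosed_iInter fun i => isClosed_iInter fun l => ?_
    refine isClosed_le ?_ continuous_const
    unfold cross
    have c1 := cnt_cont i r
    have c2 := cnt_cont l r
    have c1' : Continuous fun s : Seq3 => (cnt s i r : ℝ) :=
      (continuous_of_discreteTopology (f := fun z : ℤ => (z : ℝ))).comp c1
    have c2' : Continuous fun s : Seq3 => (cnt s l r : ℝ) :=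
      (continuous_of_discreteTopology (f := fun z : ℤ => (z : ℝ))).comp c2
    fun_prop
  have hgF : g ∈ F := by
    intro p
    refine ⟨mem_beta.1 hg p, fun r i l => ?_⟩
    have e : cross (sh p g) v i l r = cross g v i l (p + r) - cross g v i l p := by
      simp only [cross, cnt_sh]
      push_cast
      ring
    rw [e]
    refine (abs_sub _ _).trans ?_
    have h1 := hd (p + r) i l
    have h2 := hd p i l
    linarith
  have hFinv : Set.MapsTo shift F F := by
    intro s hs p
    have : sh p (shift s) = sh (1 + p) s := sh_sh p 1 s
    rw [this]
    exact hs (1 + p)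
  obtain ⟨Y, hYF, hY⟩ := exists_minimal F ⟨g, hgF⟩ hF hFinv
  refine ⟨Y, hY, fun s hs => mem_beta.2 fun r => (hYF hs r).1, ⟨3 * (2 * C) + 1, by positivity, ?_⟩, ?_⟩
  · intro s hs r
    refine lt_of_le_of_lt ?_ (lt_add_one _)
    rw [pi_norm_le_iff_of_nonneg (by positivity)]
    intro i
    have h1 := Dev_S (ε := 0) (C := 2 * C) (s := s) (V := v)
      (fun r i l => by rw [zero_mul, zero_add]; exact (hYF hs 0).2 r i l) r i
    rw [hv, one_mul, zero_mul, zero_add] at h1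
    simpa [birk_cnt] using h1
  · intro s hs
    refine freq_of_D hv (Dev.toD ⟨2 * C, by positivity, fun r i l => ?_⟩)
    rw [zero_mul, zero_add]; exact (hYF hs 0).2 r i l


/-! ### Desubstitution -/

theorem lt_two_of_ne {c : Fin 3} (h : c ≠ 2) : c < 2 := by
  revert h; revert c; decide

theorem pos_of_ne {c : Fin 3} (h : c ≠ 0) : 0 < c := by
  revert h; revert c; decide

theorem hd_false (c : Fin 3) : hd false c = c := rfl

theorem dom_low {x s : Seq3} {p : ℕ} (h2 : s p = 2) (h0 : s (p + 1) ≠ 0) : dom (su false x) s := by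
  intro r
  obtain ⟨j, hj⟩ := su_shift_le false x r
  refine ⟨p, lexLe_trans hj ?_⟩
  have e0 : sh p s 0 = 2 := by simp [sh, h2]
  have e1 : sh p s 1 = s (p + 1) := by simp [sh, Nat.add_comm]
  by_cases hc : sh j x 0 = 2
  · refine (lexLt_head1 ?_ ?_).le
    · rw [su_0, hd_false, hc, e0]
    · rw [su_1 (by rw [hc]; rfl), e1]
      exact pos_of_ne h0
  · refine (lexLt_head ?_).le
    rw [su_0, hd_false, e0]
    exact lt_two_of_ne hc

theorem pos_le (b : Bool) (x : Seq3) (j : ℕ) : pos b x j ≤ 2 * j := by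
  induction j with
  | zero => simp [pos]
  | succ j ih => have := bl_le b (x j); simp only [pos]; omega

def qG (s : Seq3) : ℕ → ℕ
  | 0 => 0
  | j + 1 => qG s j + bl false (s (qG s j))

theorem desub_false {s : Seq3} (h : ∀ p, s p = 2 → s (p + 1) = 0) :
    ∃ x, su false x = s := by
  refine ⟨fun j => s (qG s j), ?_⟩
  set x : Seq3 := fun j => s (qG s j) with hx
  have hq : ∀ j, pos false x j = qG s j := by
    intro j
    induction j with
    | zero => rfl
    | succ j ih => simp only [pos, qG, ih]; rfl
  funext t
  obtain ⟨j, ht | ⟨ht, hf⟩⟩ := pos_cover false x t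
  · rw [ht, su_at_pos, hq, hd_false]
  · rw [ht, su_at_pos1 hf, hq]
    have := hd_of_fl hf
    rw [hd_false] at this
    exact (h _ this).symm

theorem lemA_G {V : Fin 3 → ℝ} {s : Seq3} (hV : ∀ i, 0 ≤ V i) (hS : 0 < Sm V) (hD : D s V)
    (h20 : V 2 ≤ V 0) : ∃ x, D x (T false V) ∧ dom (su false x) s := by
  by_cases h : ∀ p, s p = 2 → s (p + 1) = 0
  · obtain ⟨x, rfl⟩ := desub_false h
    refine ⟨x, ?_, dom.refl _⟩
    refine D_of_samples (S := Sm V) (K := 2) (C₀ := 0) (fun j => pos false x j) hS two_pos le_rfl ?_ ?_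
    · intro j
      have : ((pos false x j : ℕ) : ℝ) ≤ ((2 * j : ℕ) : ℝ) := by exact_mod_cast pos_le false x j
      push_cast at this
      linarith
    · intro ε hε
      obtain ⟨C, hC, hh⟩ := D_S hD (ε / 2) (by positivity)
      refine ⟨2 * C, by positivity, fun j i => ?_⟩
      have k0 := abs_le.1 (hh (pos false x j) 0)
      have k1 := abs_le.1 (hh (pos false x j) 1)
      have k2 := abs_le.1 (hh (pos false x j) 2)
      obtain ⟨a0, a1, a2⟩ := cnt_pos_false x j
      rw [a0] at k0
      rw [a1] at k1
      rw [a2] at k2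
      push_cast at k0
      have hp : (0 : ℝ) ≤ (pos false x j : ℝ) := by positivity
      have hp' : 0 ≤ ε * (pos false x j : ℝ) := by positivity
      rw [abs_le, T_false]
      fin_cases i <;> simp <;> constructor <;> nlinarith
  · push Not at h
    obtain ⟨p, h2, h0⟩ := h
    have h00 := hV 0
    have h01 := hV 1
    have h02 := hV 2
    refine ⟨bal (T false V), (bal_dev ?_ ?_).toD, dom_low h2 h0⟩
    · intro i
      rw [T_false]
      fin_cases i <;> simp <;> linarith
    · simp only [Sm, T_false] at hS ⊢
      simp
      linarith

theorem zero_run {s : Seq3} {t t' : ℕ} (htt : t ≤ t') (h : ∀ u, t ≤ u → u < t' → s u = 0)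
    {i : Fin 3} (hi : i ≠ 0) : cnt s i t' = cnt s i t := by
  induction t', htt using Nat.le_induction with
  | base => rfl
  | succ n hn ih =>
    rw [cnt_succ, ih (fun u h1 h2 => h u h1 (by omega)), h n hn (by omega), if_neg (Ne.symm hi), add_zero]

theorem lemA_L {V : Fin 3 → ℝ} {s : Seq3} (hV : ∀ i, 0 ≤ V i) (hD : D s V)
    (h02 : V 0 < V 2) : ∃ x, D x (T true V) ∧ dom (su true x) s := by
  classical
  have hv0 := hV 0
  have hv1 := hV 1
  have hz : 0 < V 2 := lt_of_le_of_lt hv0 h02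
  have hS : 0 < Sm V := by unfold Sm; linarith
  let e : ℕ → ℤ := fun t => cnt s 2 t - cnt s 0 t
  have e0 : e 0 = 0 := by simp [e, cnt]
  have es0 : ∀ t, s t = 0 → e (t + 1) = e t - 1 := by
    intro t ht; simp only [e, cnt_succ, ht]; simp; ring
  have es1 : ∀ t, s t = 1 → e (t + 1) = e t := by
    intro t ht; simp only [e, cnt_succ, ht]; simp
  have es2 : ∀ t, s t = 2 → e (t + 1) = e t + 1 := by
    intro t ht; simp only [e, cnt_succ, ht]; simp; ring
  have tri : ∀ t, s t = 0 ∨ s t = 1 ∨ s t = 2 := by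
    intro t; generalize s t = c; revert c; decide
  have ebd : ∀ ε : ℝ, 0 < ε → ∃ C : ℝ, 0 ≤ C ∧ ∀ t : ℕ,
      |Sm V * cnt s 1 t - t * V 1| ≤ ε * t + C ∧ |Sm V * cnt s 2 t - t * V 2| ≤ ε * t + C ∧
      |Sm V * e t - t * (V 2 - V 0)| ≤ 2 * ε * t + 2 * C := by
    intro ε hε
    obtain ⟨C, hC, hh⟩ := D_S hD ε hε
    refine ⟨C, hC, fun t => ⟨hh t 1, hh t 2, ?_⟩⟩
    have k0 := abs_le.1 (hh t 0)
    have k2 := abs_le.1 (hh t 2)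
    simp only [e]
    push_cast
    rw [abs_le]
    constructor <;> nlinarith
  -- divergence
  have ediv : ∀ N : ℤ, ∃ t₀, ∀ t, t₀ ≤ t → N < e t := by
    intro N
    obtain ⟨C, hC, hh⟩ := ebd ((V 2 - V 0) / 4) (by linarith)
    obtain ⟨t₀, ht₀⟩ := exists_nat_gt ((Sm V * N + 2 * C) / ((V 2 - V 0) / 2))
    refine ⟨t₀, fun t ht => ?_⟩
    have k := (abs_le.1 (hh t).2.2).1
    rw [div_lt_iff₀ (by linarith)] at ht₀
    have ht' : (t₀ : ℝ) ≤ t := by exact_mod_cast ht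
    have k2 : (t₀ : ℝ) * ((V 2 - V 0) / 2) ≤ t * ((V 2 - V 0) / 2) :=
      mul_le_mul_of_nonneg_right ht' (by linarith)
    have : Sm V * (N : ℝ) < Sm V * e t := by nlinarith
    have := lt_of_mul_lt_mul_left this hS.le
    exact_mod_cast this
  have hmin : ∀ t, ∃ m : ℤ, (∀ u, t ≤ u → m ≤ e u) ∧ ∃ u, t ≤ u ∧ e u = m := by
    intro t
    have hb : ∃ b : ℤ, ∀ z, (∃ u, t ≤ u ∧ e u = z) → b ≤ z := by
      obtain ⟨t₀, ht₀⟩ := ediv 0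
      refine ⟨-t₀, ?_⟩
      rintro z ⟨u, -, rfl⟩
      by_cases hu : t₀ ≤ u
      · have := ht₀ u hu; omega
      · have h1 := cnt_le s 0 u
        have h2 := cnt_nonneg s 2 u
        simp only [e]
        omega
    obtain ⟨m, hm, hm'⟩ := Int.exists_least_of_bdd hb ⟨e t, t, le_rfl, rfl⟩
    exact ⟨m, fun u hu => hm' _ ⟨u, hu, rfl⟩, hm⟩
  choose μ hμ hμ' using hmin
  have μsame : ∀ t, (∃ u, t < u ∧ e u ≤ e t) → μ (t + 1) = μ t := by
    rintro t ⟨u, hu, hut⟩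
    apply le_antisymm
    · obtain ⟨w, hw, hw'⟩ := hμ' t
      rw [← hw']
      rcases Nat.eq_or_lt_of_le hw with h | h
      · subst h
        exact (hμ (t + 1) u hu).trans hut
      · exact hμ (t + 1) w h
    · obtain ⟨w, hw, hw'⟩ := hμ' (t + 1)
      rw [← hw']
      exact hμ t w (by omega)
  have μstep : ∀ t, s t = 2 → (¬ ∃ u, t < u ∧ e u ≤ e t) → μ (t + 1) = μ t + 1 := by
    intro t ht hun
    push Not at hun
    have a1 : μ t = e t := by
      obtain ⟨w, hw, hw'⟩ := hμ' t
      apply le_antisymm (hμ t t le_rfl)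
      rw [← hw']
      rcases Nat.eq_or_lt_of_le hw with h | h
      · subst h; exact le_rfl
      · exact (hun w h).le
    have a2 : μ (t + 1) = e (t + 1) := by
      obtain ⟨w, hw, hw'⟩ := hμ' (t + 1)
      apply le_antisymm (hμ _ _ le_rfl)
      rw [← hw', es2 t ht]
      exact hun w hw
    rw [a1, a2, es2 t ht]
  have hex : ∀ t, ∃ u, t ≤ u ∧ s u ≠ 0 := by
    intro t
    by_contra hc
    push Not at hc
    have hdec : ∀ u, t ≤ u → e u ≤ e t := by
      intro u hu
      induction u, hu using Nat.le_induction with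
      | base => exact le_rfl
      | succ n hn ih => rw [es0 n (hc n hn)]; omega
    obtain ⟨t₀, ht₀⟩ := ediv (e t)
    have h1 := ht₀ (max t t₀) (le_max_right _ _)
    have h2 := hdec (max t t₀) (le_max_left _ _)
    omega
  have hnx : ∀ t, ∃ n, t ≤ n ∧ s n ≠ 0 ∧ ∀ u, t ≤ u → u < n → s u = 0 := by
    intro t
    refine ⟨Nat.find (hex t), (Nat.find_spec (hex t)).1, (Nat.find_spec (hex t)).2, fun u h1 h2 => ?_⟩
    have := Nat.find_min (hex t) h2
    push Not at this
    exact this h1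
  choose nx nx1 nx2 nx3 using hnx
  have nx_eq : ∀ t, s t ≠ 0 → nx t = t := by
    intro t ht
    by_contra hc
    exact ht (nx3 t t le_rfl (lt_of_le_of_ne (nx1 t) (Ne.symm hc)))
  have nx_eq2 : ∀ t, s t = 0 → s (t + 1) ≠ 0 → nx t = t + 1 := by
    intro t ht ht'
    have h1 := nx1 t
    have h2 := nx2 t
    have h3 : nx t ≠ t := fun h => h2 (by rw [h]; exact ht)
    by_contra hc
    exact ht' (nx3 t (t + 1) (by omega) (by omega))
  obtain ⟨q, q0, qs⟩ : ∃ q : ℕ → ℕ, q 0 = nx 0 ∧ ∀ j, q (j + 1) = nx (q j + 1) :=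
    ⟨fun j => Nat.rec (motive := fun _ => ℕ) (nx 0) (fun _ p => nx (p + 1)) j, rfl, fun _ => rfl⟩
  have qne : ∀ j, s (q j) ≠ 0 := by
    intro j
    cases j with
    | zero => rw [q0]; exact nx2 0
    | succ j => rw [qs]; exact nx2 _
  let M : ℕ → Prop := fun t => ∃ u, t < u ∧ e u ≤ e t
  have dM : ∀ t, Decidable (M t) := fun t => Classical.dec (M t)
  let x : Seq3 := fun j => if s (q j) = 1 then 0 else if M (q j) then 1 else 2
  have xcase : ∀ j, (s (q j) = 1 ∧ x j = 0) ∨ (s (q j) = 2 ∧ M (q j) ∧ x j = 1) ∨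
      (s (q j) = 2 ∧ ¬ M (q j) ∧ x j = 2) := by
    intro j
    rcases tri (q j) with h | h | h
    · exact absurd h (qne j)
    · left; exact ⟨h, by simp [x, h]⟩
    · right
      by_cases hm : M (q j)
      · left
        exact ⟨h, hm, by simp [x, h, hm]⟩
      · right
        exact ⟨h, hm, by simp [x, h, hm]⟩
  -- coinduction
  have hR : ∀ j, (∀ u, q j ≤ u → e (q j) ≤ e u) → lexLe (su true (sh j x)) (sh (q j) s) := by
    intro j hj
    refine lexLe_coind (fun a b => ∃ j, (∀ u, q j ≤ u → e (q j) ≤ e u) ∧ a = su true (sh j x) ∧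
      b = sh (q j) s) ?_ ⟨j, hj, rfl, rfl⟩
    rintro a b ⟨j, hj, rfl, rfl⟩
    have hx0 : sh j x 0 = x j := by simp [sh]
    have hs0 : sh (q j) s 0 = s (q j) := by simp [sh]
    have hs1 : sh (q j) s 1 = s (q j + 1) := by simp [sh, Nat.add_comm]
    have hblk := sh_su1 true (sh j x)
    rw [sh_sh, hx0] at hblk
    rcases xcase j with ⟨h1, h2⟩ | ⟨h1, hm, h2⟩ | ⟨h1, hm, h2⟩
    · right
      have hne : s (q j + 1) ≠ 0 := by
        intro h
        have k1 := es0 _ h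
        have k2 := es1 _ h1
        have k3 := hj (q j + 1 + 1) (by omega)
        omega
      have hq : q (j + 1) = q j + 1 := by rw [qs, nx_eq _ hne]
      refine ⟨1, one_pos, ?_, j + 1, ?_, ?_, ?_⟩
      · intro i hi
        have : i = 0 := by omega
        subst this
        rw [su_0, hx0, h2, hs0, h1]; rfl
      · rw [hq, es1 _ h1]
        exact fun u hu => hj u (by omega)
      · rw [h2] at hblk
        exact hblk
      · rw [sh_sh, hq]
    · by_cases hne : s (q j + 1) = 0
      · right
        have k2 := es2 _ h1
        have k1 := es0 _ hne
        have hne2 : s (q j + 1 + 1) ≠ 0 := by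
          intro h
          have k4 := es0 _ h
          have k3 := hj (q j + 1 + 1 + 1) (by omega)
          omega
        have hq : q (j + 1) = q j + 2 := by rw [qs, nx_eq2 _ hne hne2]
        refine ⟨2, two_pos, ?_, j + 1, ?_, ?_, ?_⟩
        · intro i hi
          have : i = 0 ∨ i = 1 := by omega
          rcases this with rfl | rfl
          · rw [su_0, hx0, h2, hs0, h1]; rfl
          · rw [su_1 (by rw [hx0, h2]; rfl), hs1, hne]
        · rw [hq]
          intro u hu
          have := hj u (by omega)
          have e2 : e (q j + 2) = e (q j) := by
            rw [show q j + 2 = q j + 1 + 1 from rfl]; omega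
          omega
        · rw [h2] at hblk
          exact hblk
        · rw [sh_sh, hq]
      · left
        refine (lexLt_head1 ?_ ?_).le
        · rw [su_0, hx0, h2, hs0, h1]; rfl
        · rw [su_1 (by rw [hx0, h2]; rfl), hs1]
          exact pos_of_ne hne
    · right
      have hm' : ∀ u, q j < u → e (q j) < e u := by
        intro u hu
        by_contra hc
        exact hm ⟨u, hu, not_lt.1 hc⟩
      have k2 := es2 _ h1
      have hne : s (q j + 1) ≠ 0 := by
        intro h
        have k1 := es0 _ h
        have k3 := hm' (q j + 1 + 1) (by omega)
        omega
      have hq : q (j + 1) = q j + 1 := by rw [qs, nx_eq _ hne]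
      refine ⟨1, one_pos, ?_, j + 1, ?_, ?_, ?_⟩
      · intro i hi
        have : i = 0 := by omega
        subst this
        rw [su_0, hx0, h2, hs0, h1]; rfl
      · rw [hq, k2]
        exact fun u hu => hm' u (by omega)
      · rw [h2] at hblk
        exact hblk
      · rw [sh_sh, hq]
  -- an unmatched 2
  obtain ⟨p, hp2, hpu⟩ : ∃ p, s p = 2 ∧ ¬ M p := by
    obtain ⟨t₀, ht₀⟩ := ediv 0
    have hlast : ∃ n, 0 < e n ∧ ∀ u, n ≤ u → 0 < e u := ⟨t₀, ht₀ t₀ le_rfl, ht₀⟩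
    let n := Nat.find hlast
    have hn := Nat.find_spec hlast
    have hn0 : n ≠ 0 := by
      intro h
      have := hn.2 0 (by change n ≤ 0; omega)
      omega
    obtain ⟨p, hp⟩ := Nat.exists_eq_succ_of_ne_zero hn0
    have hpn := Nat.find_min hlast (m := p) (by change p < n; omega)
    have hpos : ∀ u, p < u → 0 < e u := fun u hu => hn.2 u (by change n ≤ u; omega)
    have hp0 : e p ≤ 0 := by
      by_contra hc
      apply hpn
      refine ⟨by omega, fun u hu => ?_⟩
      rcases Nat.eq_or_lt_of_le hu with h | h
      · subst h; omega
      · exact hpos u h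
    refine ⟨p, ?_, ?_⟩
    · have k := hpos (p + 1) (by omega)
      rcases tri p with h | h | h
      · have := es0 p h; omega
      · have := es1 p h; omega
      · exact h
    · rintro ⟨u, hu, hu'⟩
      have := hpos u hu
      omega
  have hp1 : s (p + 1) ≠ 0 := by
    intro h
    apply hpu
    refine ⟨p + 1 + 1, by omega, ?_⟩
    rw [es0 _ h, es2 _ hp2]; omega
  refine ⟨x, ?_, ?_⟩
  · -- frequencies
    have cinv : ∀ j, cnt x 0 j = cnt s 1 (q j) ∧ cnt x 1 j + cnt x 2 j = cnt s 2 (q j) ∧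
        cnt x 2 j = μ (q j) - μ 0 := by
      have μrun : ∀ t t', t ≤ t' → (∀ u, t ≤ u → u < t' → s u = 0) → μ t' = μ t := by
        intro t t' htt h
        induction t', htt using Nat.le_induction with
        | base => rfl
        | succ n hn ih =>
          rw [μsame n ⟨n + 1, by omega, by rw [es0 n (h n hn (by omega))]; omega⟩,
            ih (fun u h1 h2 => h u h1 (by omega))]
      intro j
      induction j with
      | zero =>
        have a1 := zero_run (s := s) (nx1 0) (nx3 0) (i := 1) (by decide)
        have a2 := zero_run (s := s) (nx1 0) (nx3 0) (i := 2) (by decide)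
        have a3 := μrun _ _ (nx1 0) (nx3 0)
        rw [q0, a1, a2, a3]
        simp [cnt]
      | succ j ih =>
        have a1 := zero_run (s := s) (nx1 (q j + 1)) (nx3 _) (i := 1) (by decide)
        have a2 := zero_run (s := s) (nx1 (q j + 1)) (nx3 _) (i := 2) (by decide)
        have a3 := μrun _ _ (nx1 (q j + 1)) (nx3 _)
        rw [qs, a1, a2, a3]
        obtain ⟨b1, b2, b3⟩ := ih
        simp only [cnt_succ]
        rcases xcase j with ⟨h1, h2⟩ | ⟨h1, hm, h2⟩ | ⟨h1, hm, h2⟩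
        · rw [μsame (q j) ⟨q j + 1, by omega, by rw [es1 _ h1]⟩, h1, h2]
          simp
          omega
        · rw [μsame (q j) hm, h1, h2]
          simp
          omega
        · rw [μstep (q j) h1 hm, h1, h2]
          simp
          omega
    obtain ⟨C, hC, hh⟩ := ebd (V 2 / 4) (by linarith)
    refine D_of_samples (S := Sm V) (K := 2 * Sm V / V 2) (C₀ := 4 * C / V 2) q hS
      (by positivity) (by positivity) ?_ ?_
    · intro j
      have k1 := (abs_le.1 (hh (q j)).1).1
      have k2 := (abs_le.1 (hh (q j)).2.1).1
      obtain ⟨b1, b2, b3⟩ := cinv j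
      have hs := cnt_sum x j
      have hs' : ((j : ℕ) : ℝ) = (cnt s 1 (q j) : ℝ) + cnt s 2 (q j) := by
        have : (j : ℤ) = cnt s 1 (q j) + cnt s 2 (q j) := by omega
        exact_mod_cast this
      have hqv : 0 ≤ (q j : ℝ) * V 1 := mul_nonneg (Nat.cast_nonneg _) hv1
      have key : (q j : ℝ) * V 2 ≤ 2 * Sm V * j + 4 * C := by
        rw [hs']; nlinarith
      have : 2 * Sm V / V 2 * j + 4 * C / V 2 = (2 * Sm V * j + 4 * C) / V 2 := by
        field_simp
      rw [this, le_div_iff₀ hz]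
      exact key
    · intro ε hε
      obtain ⟨C, hC, hh⟩ := ebd (min (ε / 3) ((V 2 - V 0) / 2)) (lt_min (by positivity) (by linarith))
      set δ := min (ε / 3) ((V 2 - V 0) / 2) with hδ
      have hδ1 : δ ≤ ε / 3 := min_le_left _ _
      have hδ2 : δ ≤ (V 2 - V 0) / 2 := min_le_right _ _
      refine ⟨3 * C + Sm V * |(μ 0 : ℝ)|, by positivity, fun j i => ?_⟩
      obtain ⟨b1, b2, b3⟩ := cinv j
      have k1 := abs_le.1 (hh (q j)).1
      have k2 := abs_le.1 (hh (q j)).2.1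
      have k3 := abs_le.1 (hh (q j)).2.2
      have hq0 : (0 : ℝ) ≤ q j := Nat.cast_nonneg _
      have up : Sm V * (μ (q j) : ℝ) ≤ Sm V * (e (q j) : ℝ) := by
        apply mul_le_mul_of_nonneg_left _ hS.le
        exact_mod_cast hμ (q j) (q j) le_rfl
      have lo : (q j : ℝ) * (V 2 - V 0) - 2 * δ * (q j : ℝ) - 2 * C ≤ Sm V * (μ (q j) : ℝ) := by
        obtain ⟨u, hu, hu'⟩ := hμ' (q j)
        rw [← hu']
        have k4 := (abs_le.1 (hh u).2.2).1
        have hu2 : (q j : ℝ) ≤ u := by exact_mod_cast hu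
        have : (q j : ℝ) * (V 2 - V 0 - 2 * δ) ≤ u * (V 2 - V 0 - 2 * δ) :=
          mul_le_mul_of_nonneg_right hu2 (by linarith)
        nlinarith
      have m1 : Sm V * (μ 0 : ℝ) ≤ Sm V * |(μ 0 : ℝ)| :=
        mul_le_mul_of_nonneg_left (le_abs_self _) hS.le
      have m2 : -(Sm V * |(μ 0 : ℝ)|) ≤ Sm V * (μ 0 : ℝ) := by
        rw [← mul_neg]
        exact mul_le_mul_of_nonneg_left (neg_abs_le _) hS.le
      have m3 : 0 ≤ Sm V * |(μ 0 : ℝ)| := by positivity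
      have d1 : δ * (q j : ℝ) ≤ ε / 3 * (q j : ℝ) := mul_le_mul_of_nonneg_right hδ1 hq0
      have c0 : (cnt x 0 j : ℝ) = cnt s 1 (q j) := by exact_mod_cast b1
      have c2 : (cnt x 2 j : ℝ) = μ (q j) - μ 0 := by exact_mod_cast b3
      have c1 : (cnt x 1 j : ℝ) = cnt s 2 (q j) - (μ (q j) - μ 0) := by
        have : cnt x 1 j = cnt s 2 (q j) - (μ (q j) - μ 0) := by omega
        exact_mod_cast this
      have hεq : 0 ≤ ε * (q j : ℝ) := mul_nonneg hε.le hq0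
      rw [T_true]
      have g0 : |Sm V * cnt x 0 j - (q j : ℝ) * V 1| ≤ ε * (q j : ℝ) + (3 * C + Sm V * |(μ 0 : ℝ)|) := by
        rw [c0, abs_le]; constructor <;> linarith
      have g1 : |Sm V * cnt x 1 j - (q j : ℝ) * V 0| ≤ ε * (q j : ℝ) + (3 * C + Sm V * |(μ 0 : ℝ)|) := by
        rw [c1, abs_le, mul_sub, mul_sub]; constructor <;> linarith
      have g2 : |Sm V * cnt x 2 j - (q j : ℝ) * (V 2 - V 0)| ≤
          ε * (q j : ℝ) + (3 * C + Sm V * |(μ 0 : ℝ)|) := by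
        rw [c2, abs_le, mul_sub]; constructor <;> linarith
      fin_cases i
      · exact g0
      · exact g1
      · exact g2
  · intro r
    obtain ⟨j, hj⟩ := su_shift_le true x r
    have hx0 : sh j x 0 = x j := by simp [sh]
    have f0 : sh p s 0 = 2 := by simp [sh, hp2]
    have f1 : sh p s 1 = s (p + 1) := by simp [sh, Nat.add_comm]
    rcases xcase j with ⟨h1, h2⟩ | ⟨h1, hm, h2⟩ | ⟨h1, hm, h2⟩
    · refine ⟨p, lexLe_trans hj (lexLt_head ?_).le⟩
      rw [su_0, hx0, h2, f0]; decide
    · refine ⟨p, lexLe_trans hj (lexLt_head1 ?_ ?_).le⟩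
      · rw [su_0, hx0, h2, f0]; decide
      · rw [su_1 (by rw [hx0, h2]; rfl), f1]
        exact pos_of_ne hp1
    · refine ⟨q j, lexLe_trans hj (hR j fun u hu => ?_)⟩
      rcases Nat.eq_or_lt_of_le hu with h | h
      · rw [h]
      · by_contra hc
        exact hm ⟨u, h, by omega⟩

/-! ### Itineraries -/

open Classical in
noncomputable def st (α : Fin 3 → ℝ) : ℕ → Fin 3 → ℝ
  | 0 => α
  | k + 1 => T (decide (st α k 0 < st α k 2)) (st α k)

open Classical in
noncomputable def itin (α : Fin 3 → ℝ) (k : ℕ) : Bool := decide (st α k 0 < st α k 2)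

theorem VT_itin (α : Fin 3 → ℝ) (k : ℕ) : VT (itin α) α k = st α k := by
  induction k with
  | zero => rfl
  | succ k ih => simp only [VT, st, ih, itin]

/-- `V` follows `b` at step `j`. -/
def Ag (b : ℕ → Bool) (V : Fin 3 → ℝ) (j : ℕ) : Prop := b j = true ↔ VT b V j 0 < VT b V j 2

theorem Ag_itin (α : Fin 3 → ℝ) (j : ℕ) : Ag (itin α) α j := by
  unfold Ag
  rw [VT_itin]
  simp [itin]

theorem VT_true {b : ℕ → Bool} {V : Fin 3 → ℝ} {k : ℕ} (h : b k = true) :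
    VT b V (k + 1) 0 = VT b V k 1 ∧ VT b V (k + 1) 1 = VT b V k 0 ∧
    VT b V (k + 1) 2 = VT b V k 2 - VT b V k 0 := by
  simp [VT, h, T_true]

theorem VT_false {b : ℕ → Bool} {V : Fin 3 → ℝ} {k : ℕ} (h : b k = false) :
    VT b V (k + 1) 0 = VT b V k 0 - VT b V k 2 ∧ VT b V (k + 1) 1 = VT b V k 1 ∧
    VT b V (k + 1) 2 = VT b V k 2 := by
  simp [VT, h, T_false]

theorem VT_nonneg {b : ℕ → Bool} {V : Fin 3 → ℝ} (hV : ∀ i, 0 ≤ V i) (hS : 0 < Sm V) (k : ℕ)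
    (hag : ∀ j, j < k → Ag b V j) : (∀ i, 0 ≤ VT b V k i) ∧ 0 < Sm (VT b V k) := by
  induction k with
  | zero => exact ⟨hV, hS⟩
  | succ k ih =>
    obtain ⟨h1, h2⟩ := ih fun j hj => hag j (by omega)
    have a := hag k (by omega)
    have h10 := h1 0
    have h11 := h1 1
    have h12 := h1 2
    unfold Ag at a
    unfold Sm at h2 ⊢
    by_cases hb : b k = true
    · obtain ⟨c0, c1, c2⟩ := VT_true (V := V) hb
      have a' := a.1 hb
      refine ⟨?_, by rw [c0, c1, c2]; linarith⟩
      intro i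
      fin_cases i
      · exact c0 ▸ h11
      · exact c1 ▸ h10
      · change 0 ≤ VT b V (k + 1) 2
        rw [c2]; linarith
    · have a' : VT b V k 2 ≤ VT b V k 0 := not_lt.1 fun h => hb (a.2 h)
      obtain ⟨c0, c1, c2⟩ := VT_false (V := V) (Bool.eq_false_iff.2 hb)
      refine ⟨?_, by rw [c0, c1, c2]; linarith⟩
      intro i
      fin_cases i
      · change 0 ≤ VT b V (k + 1) 0
        rw [c0]; linarith
      · exact c1 ▸ h11
      · exact c2 ▸ h12

theorem VT_two_pos {b : ℕ → Bool} {V : Fin 3 → ℝ} (h2 : 0 < V 2) (k : ℕ)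
    (hag : ∀ j, j < k → Ag b V j) : 0 < VT b V k 2 := by
  induction k with
  | zero => exact h2
  | succ k ih =>
    have h := ih fun j hj => hag j (by omega)
    have a := hag k (by omega)
    unfold Ag at a
    by_cases hb : b k = true
    · rw [(VT_true (V := V) hb).2.2]
      have := a.1 hb
      linarith
    · rw [(VT_false (V := V) (Bool.eq_false_iff.2 hb)).2.2]
      exact h

theorem desc {b : ℕ → Bool} {V : Fin 3 → ℝ} {s : Seq3} (hV : ∀ i, 0 ≤ V i) (hS : 0 < Sm V)
    (hD : D s V) (k : ℕ) (hag : ∀ j, j < k → Ag b V j) :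
    ∃ x, D x (VT b V k) ∧ dom (Phi b k x) s := by
  induction k with
  | zero => exact ⟨s, hD, dom.refl _⟩
  | succ k ih =>
    obtain ⟨x, hx, hd⟩ := ih fun j hj => hag j (by omega)
    obtain ⟨h1, h2⟩ := VT_nonneg hV hS k fun j hj => hag j (by omega)
    have a := hag k (by omega)
    unfold Ag at a
    have key : ∃ y, D y (T (b k) (VT b V k)) ∧ dom (su (b k) y) x := by
      by_cases hb : b k = true
      · rw [hb]
        exact lemA_L h1 hx (a.1 hb)
      · have hb' := Bool.eq_false_iff.2 hb
        rw [hb']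
        exact lemA_G h1 h2 hx (not_lt.1 fun h => hb (a.2 h))
    obtain ⟨y, hy, hyd⟩ := key
    exact ⟨y, hy, (Phi_dom b k hyd).trans hd⟩

def t20 : Seq3 := fun n => if n = 0 then 2 else 0

theorem t20_le {x : Seq3} (h : x 0 = 2) : lexLe t20 x := by
  apply lexLe_of_not
  rintro ⟨n, -, hlt⟩
  rcases Nat.eq_zero_or_pos n with rfl | hn
  · rw [h] at hlt
    simp [t20] at hlt
  · have : t20 n = 0 := by simp [t20, hn.ne']
    rw [this] at hlt
    exact absurd hlt (by simp)

theorem t20_max : t20 ∈ MaxSet := by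
  rw [mem_max]
  refine ⟨rfl, fun r => ?_⟩
  rcases Nat.eq_zero_or_pos r with rfl | hr
  · exact lexLe_refl _
  · refine (lexLt_head ?_).le
    simp [sh, t20, hr.ne']

theorem lin_absurd {a C : ℝ} (ha : 0 < a) (h : ∀ j : ℕ, ∃ r : ℕ, j ≤ r ∧ a * (r : ℝ) ≤ C) : False := by
  obtain ⟨j, hj⟩ := exists_nat_gt (C / a)
  obtain ⟨r, hr, hC⟩ := h j
  have hr' : (j : ℝ) ≤ r := by exact_mod_cast hr
  rw [div_lt_iff₀ ha] at hj
  nlinarith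

theorem has_two {x : Seq3} {V : Fin 3 → ℝ} (hD : D x V) (h2 : 0 < V 2) : ∃ p, x p = 2 := by
  by_contra hc
  push Not at hc
  have h0 : ∀ r, cnt x 2 r = 0 := by
    intro r
    induction r with
    | zero => rfl
    | succ r ih => rw [cnt_succ, ih, if_neg (hc r)]; rfl
  obtain ⟨C, hC, hh⟩ := D_S hD (V 2 / 2) (by positivity)
  refine lin_absurd (a := V 2 / 2) (C := C) (by positivity) fun j => ⟨j, le_rfl, ?_⟩
  have := (abs_le.1 (hh j 2)).1
  rw [h0] at this
  push_cast at this
  linarith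

theorem low_max {b : ℕ → Bool} {V : Fin 3 → ℝ} {m : Seq3} (hV : ∀ i, 0 ≤ V i) (h2 : 0 < V 2)
    (hD : D m V) (hm : m ∈ MaxSet) (k : ℕ) (hag : ∀ j, j < k → Ag b V j) :
    lexLe (Phi b k t20) m := by
  have hS : 0 < Sm V := by
    have := hV 0
    have := hV 1
    unfold Sm; linarith
  obtain ⟨x, hx, hd⟩ := desc hV hS hD k hag
  obtain ⟨p, hp⟩ := has_two hx (VT_two_pos h2 k hag)
  obtain ⟨r, hr⟩ := Phi_shift b k x p
  obtain ⟨r', hr'⟩ := hd r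
  have h1 : lexLe t20 (sh p x) := t20_le (by simpa [sh] using hp)
  have h2 := Phi_mono b k h1
  rw [← hr] at h2
  exact lexLe_trans h2 (lexLe_trans hr' ((mem_max.1 hm).2 r'))

theorem sub_absurd {x : Seq3} {V : Fin 3 → ℝ} (hD : D x V) (hS : 0 ≤ Sm V) (h02 : V 0 < V 2)
    (hx : ∀ p, lexLe (sh p x) (su false two)) : False := by
  have h : ∀ p, x p = 2 → x (p + 1) = 0 := by
    intro p hp
    by_contra hc
    refine not_lexLt (hx p) (lexLt_head1 ?_ ?_)
    · simp [sh, hp, su_0, hd_false, two]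
    · rw [su_1 rfl]
      have : sh p x 1 = x (p + 1) := by simp [sh, Nat.add_comm]
      rw [this]
      exact pos_of_ne hc
  obtain ⟨y, rfl⟩ := desub_false h
  obtain ⟨C, hC, hh⟩ := D_S hD ((V 2 - V 0) / 4) (by linarith)
  refine lin_absurd (a := (V 2 - V 0) / 2) (C := 2 * C) (by linarith) fun j =>
    ⟨pos false y j, le_pos _ _ _, ?_⟩
  obtain ⟨a0, a1, a2⟩ := cnt_pos_false y j
  have k0 := abs_le.1 (hh (pos false y j) 0)
  have k2 := abs_le.1 (hh (pos false y j) 2)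
  have hle : (cnt (su false y) 2 (pos false y j) : ℝ) ≤ cnt (su false y) 0 (pos false y j) := by
    have := cnt_nonneg y 0 j
    have : cnt (su false y) 2 (pos false y j) ≤ cnt (su false y) 0 (pos false y j) := by omega
    exact_mod_cast this
  have := mul_le_mul_of_nonneg_left hle hS
  nlinarith

theorem LL {i : ℕ} {y : Seq3} (h : agree i two y) : agree (i + 1) two (su true (su true y)) := by
  induction i generalizing y with
  | zero =>
    intro n hn
    have : n = 0 := by omega
    subst this
    rw [su_0, su_0]
    generalize y 0 = c
    revert c; decide
  | succ i ih =>
    have h0 : y 0 = 2 := (h 0 (by omega)).symm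
    have e1 := sh_su1 true y
    rw [h0] at e1
    have e0 : su true y 0 = 2 := by rw [su_0, h0]; rfl
    have e2 := sh_su1 true (su true y)
    rw [e0, show bl true 2 = 1 from rfl] at e2
    rw [show bl true 2 = 1 from rfl] at e1
    rw [e1] at e2
    have hh := ih (y := sh 1 y) fun n hn => h (n + 1) (by omega)
    rw [← e2] at hh
    intro n hn
    cases n with
    | zero => rw [su_0, e0]; rfl
    | succ n => exact hh n (by omega)

theorem LL_iter {b : ℕ → Bool} {K : ℕ} (hb : ∀ k, K ≤ k → b k = true) (n : ℕ) :
    ∀ i y, agree i two y → ∃ z, Phi b (K + 2 * n) y = Phi b K z ∧ agree (i + n) two z := by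
  induction n with
  | zero => exact fun i y h => ⟨y, rfl, h⟩
  | succ n ih =>
    intro i y h
    obtain ⟨z, h1, h2⟩ := ih (i + 1) _ (LL h)
    refine ⟨z, ?_, by rwa [show i + (n + 1) = i + 1 + n by omega]⟩
    rw [← h1, show K + 2 * (n + 1) = (K + 2 * n + 1) + 1 by omega]
    simp only [Phi]
    rw [hb (K + 2 * n) (by omega), hb (K + 2 * n + 1) (by omega)]

theorem Sm_step {b : ℕ → Bool} {V : Fin 3 → ℝ} (k : ℕ) :
    Sm (VT b V (k + 1)) = Sm (VT b V k) - if b k = true then VT b V k 0 else VT b V k 2 := by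
  unfold Sm
  by_cases hb : b k = true
  · obtain ⟨c0, c1, c2⟩ := VT_true (V := V) hb
    rw [c0, c1, c2, if_pos hb]; ring
  · obtain ⟨c0, c1, c2⟩ := VT_false (V := V) (Bool.eq_false_iff.2 hb)
    rw [c0, c1, c2, if_neg hb]; ring

theorem VT_int {b : ℕ → Bool} {V : Fin 3 → ℝ} {d : ℝ} (h : ∀ i, ∃ n : ℤ, d * V i = n) (k : ℕ) :
    ∀ i, ∃ n : ℤ, d * VT b V k i = n := by
  induction k with
  | zero => exact h
  | succ k ih =>
    obtain ⟨n0, h0⟩ := ih 0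
    obtain ⟨n1, h1⟩ := ih 1
    obtain ⟨n2, h2⟩ := ih 2
    by_cases hb : b k = true
    · obtain ⟨c0, c1, c2⟩ := VT_true (V := V) hb
      intro i
      fin_cases i
      · exact ⟨n1, by rw [← h1, ← c0]; rfl⟩
      · exact ⟨n0, by rw [← h0, ← c1]; rfl⟩
      · exact ⟨n2 - n0, by push_cast; rw [← h2, ← h0, ← mul_sub, ← c2]⟩
    · obtain ⟨c0, c1, c2⟩ := VT_false (V := V) (Bool.eq_false_iff.2 hb)
      intro i
      fin_cases i
      · exact ⟨n0 - n2, by push_cast; rw [← h2, ← h0, ← mul_sub, ← c0]⟩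
      · exact ⟨n1, by rw [← h1, ← c1]; rfl⟩
      · exact ⟨n2, by rw [← h2, ← c2]; rfl⟩

theorem rat_den {v : Fin 3 → ℝ} (h : IsRat v) : ∃ d : ℝ, 0 < d ∧ ∀ i, ∃ n : ℤ, d * v i = n := by
  choose q hq using h
  have hden : ∀ i, ((q i).den : ℝ) * v i = (q i).num := by
    intro i
    rw [hq i]
    have := Rat.den_mul_eq_num (q i)
    exact_mod_cast this
  have hp : ∀ i, (0 : ℝ) < (q i).den := fun i => by exact_mod_cast (q i).den_pos
  refine ⟨(q 0).den * (q 1).den * (q 2).den, mul_pos (mul_pos (hp 0) (hp 1)) (hp 2), fun i => ?_⟩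
  fin_cases i
  · refine ⟨(q 1).den * (q 2).den * (q 0).num, ?_⟩
    push_cast
    rw [← hden 0]
    ring_nf
  · refine ⟨(q 0).den * (q 2).den * (q 1).num, ?_⟩
    push_cast
    rw [← hden 1]
    ring_nf
  · refine ⟨(q 0).den * (q 1).den * (q 2).num, ?_⟩
    push_cast
    rw [← hden 2]
    ring_nf

theorem rat_absurd {b : ℕ → Bool} {v : Fin 3 → ℝ} (hr : IsRat v) (hV : ∀ i, 0 ≤ v i) (h2 : 0 < v 2)
    (hag : ∀ j, Ag b v j) (hinf : ∀ K, ∃ k, K ≤ k ∧ b k = false) : False := by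
  have hS : 0 < Sm v := by
    have := hV 0
    have := hV 1
    unfold Sm; linarith
  obtain ⟨d, hd, hn⟩ := rat_den hr
  have hanti : Antitone fun k => Sm (VT b v k) := by
    refine antitone_nat_of_succ_le fun k => ?_
    have h1 := (VT_nonneg hV hS k fun j _ => hag j).1
    rw [Sm_step]
    have h10 := h1 0
    have h12 := h1 2
    split_ifs <;> linarith
  have key : ∀ n : ℕ, ∃ k, d * Sm (VT b v k) ≤ d * Sm v - n := by
    intro n
    induction n with
    | zero => exact ⟨0, by simp [VT]⟩
    | succ n ih =>
      obtain ⟨k, hk⟩ := ih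
      obtain ⟨k', hkk, hb⟩ := hinf k
      refine ⟨k' + 1, ?_⟩
      rw [Sm_step, if_neg (by simp [hb])]
      have h1 : Sm (VT b v k') ≤ Sm (VT b v k) := hanti hkk
      have h3 := VT_two_pos h2 k' fun j _ => hag j
      obtain ⟨z, hz⟩ := VT_int (b := b) hn k' 2
      have hz0 : (0 : ℝ) < z := by rw [← hz]; positivity
      have hz1 : (1 : ℝ) ≤ z := by
        have : 0 < z := by exact_mod_cast hz0
        exact_mod_cast this
      have := mul_le_mul_of_nonneg_left h1 hd.le
      push_cast
      rw [mul_sub, hz]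
      linarith
  obtain ⟨n, hn⟩ := exists_nat_gt (d * Sm v)
  obtain ⟨k, hk⟩ := key n
  have := (VT_nonneg hV hS k fun j _ => hag j).2
  have := mul_pos hd this
  linarith
/-- Let `α ∈ Δ'` and `v ∈ DF(I(α))`. If it is not the case that `v` is
irrational with `v₂ > 0` and `I(v) = I(α)`, then `v` is represented by a `v`-goober in
`B(I(α))`: a minimal set `Y ⊆ B(I(α))` with bounded deviation from `v`; in particular
every point of `Y` has digit frequency `v`. -/
theorem stmt19 (α : Fin 3 → ℝ) (hα : α ∈ Delta') (Iα : Seq3) (hI : IsInfimax α Iα)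
    (v : Fin 3 → ℝ) (hv : v ∈ DF Iα)
    (hnot : ¬ (¬ IsRat v ∧ 0 < v 2 ∧ IsInfimax v Iα)) :
    ∃ Y : Set Seq3, IsMinimalSet shift Y ∧ Y ⊆ BetaShift Iα ∧
      (∃ M : ℝ, 0 < M ∧ ∀ s ∈ Y, ∀ r : ℕ, ‖birk s r - (r : ℝ) • v‖ < M) ∧
      ∀ s ∈ Y, hasFreq s v := by
  obtain ⟨⟨hα0, hαs⟩, hα2⟩ := hα
  obtain ⟨s, hsB, hsf⟩ := hv
  obtain ⟨hv1, hvn⟩ := freq_sum hsf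
  have hDs := D_of_freq hsf
  have hvS : 0 < Sm v := by rw [hv1]; exact one_pos
  have hα1 : Sm α = 1 := hαs
  have hαS : 0 < Sm α := by rw [hα1]; exact one_pos
  obtain ⟨-, hImax, hIlow, hIglb⟩ := hI
  set b := itin α with hb
  have hagα : ∀ j, Ag b α j := Ag_itin α
  have hlow : ∀ k, lexLe (Phi b k t20) Iα := by
    intro k
    refine hIglb _ fun w hw => ?_
    exact low_max hα0 hα2 (D_of_freq hw.2) hw.1 k fun j _ => hagα j
  have hup : ∀ k, lexLe Iα (Phi b k two) := by
    intro k
    obtain ⟨m, hm, hmD⟩ := exists_max (VT_nonneg hα0 hαS k fun j _ => hagα j).1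
      (VT_two_pos hα2 k fun j _ => hagα j)
    exact lexLe_trans (hIlow _ ⟨Phi_max b k hm, freq_of_D hα1 (D_Phi k hmD)⟩)
      (Phi_mono b k (le_two m))
  have maxB : ∀ m, m ∈ MaxSet → lexLe m Iα → m ∈ BetaShift Iα := by
    intro m hm hle
    rw [mem_beta]
    exact fun r => lexLe_trans ((mem_max.1 hm).2 r) hle
  by_cases hdis : ∃ k, ¬ Ag b v k
  · classical
    let k := Nat.find hdis
    have hk : ¬ Ag b v k := Nat.find_spec hdis
    have hag : ∀ j, j < k → Ag b v j := fun j hj => by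
      by_contra hc
      exact Nat.find_min hdis hj hc
    clear_value k
    obtain ⟨h1, h2⟩ := VT_nonneg hvn hvS k hag
    unfold Ag at hk
    by_cases hbk : b k = true
    · have hle : VT b v k 2 ≤ VT b v k 0 := by
        by_contra hc
        exact hk ⟨fun _ => not_le.1 hc, fun _ => hbk⟩
      have h10 := h1 0
      have h11 := h1 1
      have h12 := h1 2
      have hdev : Dev 0 (bal (T false (VT b v k))) (T false (VT b v k)) := by
        refine bal_dev ?_ ?_
        · intro i
          rw [T_false]
          fin_cases i <;> simp <;> linarith
        · simp only [Sm, T_false] at h2 ⊢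
          simp
          linarith
      refine goober hv1 (g := Phi b k (su false (bal (T false (VT b v k))))) ?_
        (Dev0_Phi k (Dev0_su hdev))
      have hd : dom (su false (bal (T false (VT b v k)))) (su true t20) := by
        refine dom_low (p := 0) ?_ ?_
        · rw [su_0]; rfl
        · rw [su_1' (by rfl)]
          simp [hd, t20]
      refine (Phi_dom b k hd).beta ?_
      have e : Phi b k (su true t20) = Phi b (k + 1) t20 := by
        simp only [Phi, hbk]
      rw [e]
      exact maxB _ (Phi_max b (k + 1) t20_max) (hlow (k + 1))
    · exfalso
      have hlt : VT b v k 0 < VT b v k 2 := by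
        by_contra hc
        exact hk ⟨fun h => absurd h hbk, fun h => absurd h hc⟩
      obtain ⟨x, hx, hd⟩ := desc hvn hvS hDs k hag
      have hPB := mem_beta.1 (hd.beta hsB)
      refine sub_absurd hx h2.le hlt fun p => ?_
      obtain ⟨r, hr⟩ := Phi_shift b k x p
      have h3 := lexLe_trans (hPB r) (hup (k + 1))
      rw [hr] at h3
      have e : Phi b (k + 1) two = Phi b k (su false two) := by
        simp only [Phi, Bool.eq_false_iff.2 hbk]
      rw [e] at h3
      exact Phi_reflect b k h3
  · have hag : ∀ j, Ag b v j := by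
      intro j
      by_contra hc
      exact hdis ⟨j, hc⟩
    by_cases hinf : ∀ K, ∃ k, K ≤ k ∧ b k = false
    · exfalso
      have hv2 : 0 < v 2 := by
        by_contra hc
        have hz : v 2 = 0 := le_antisymm (not_lt.1 hc) (hvn 2)
        have hall : ∀ k, VT b v k 2 = 0 ∧ b k = false := by
          intro k
          have step : VT b v k 2 = 0 → b k = false := by
            intro h
            rw [Bool.eq_false_iff]
            intro hbk
            have h3 := (hag k).1 hbk
            have h4 := (VT_nonneg hvn hvS k fun j _ => hag j).1 0
            linarith
          induction k with
          | zero => exact ⟨hz, step hz⟩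
          | succ k ih =>
            have ih' := ih (fun h => by
              rw [Bool.eq_false_iff]
              intro hbk
              have h3 := (hag k).1 hbk
              have h4 := (VT_nonneg hvn hvS k fun j _ => hag j).1 0
              linarith)
            have h5 : VT b v (k + 1) 2 = 0 := by rw [(VT_false ih'.2).2.2]; exact ih'.1
            exact ⟨h5, step h5⟩
        have hA : ∀ k : ℕ, VT b α k 2 = α 2 ∧ VT b α k 0 = α 0 - k * α 2 := by
          intro k
          induction k with
          | zero => simp [VT]
          | succ k ih =>
            obtain ⟨c0, c1, c2⟩ := VT_false (V := α) (hall k).2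
            rw [c0, c2, ih.1, ih.2]
            push_cast
            exact ⟨rfl, by ring⟩
        refine lin_absurd (a := α 2) (C := α 0) hα2 fun j => ⟨j, le_rfl, ?_⟩
        have h6 := (VT_nonneg hα0 hαS j fun j _ => hagα j).1 0
        rw [(hA j).2] at h6
        linarith
      have hagr : ∀ k, agree (len b k 2) (Phi b k t20) (Phi b k two) := fun k =>
        Phi_len_agree b k (x := t20) (y := two) rfl
      have hagI : ∀ k, agree (len b k 2) (Phi b k t20) Iα := fun k =>
        agree_sandwich (hagr k) (hlow k) (hup k)
      have hinfv : IsInfimax v Iα := by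
        refine ⟨?_, hImax, ?_, ?_⟩
        · obtain ⟨m, hm, hmD⟩ := exists_max hvn hv2
          exact ⟨m, hm, freq_of_D hv1 hmD⟩
        · rintro w ⟨hw, hwf⟩
          refine lexLe_of_agree_left fun N => ?_
          obtain ⟨k, hk⟩ := len_ge b hinf N
          refine ⟨Phi b k t20, fun i hi => ((hagI k) i (by omega)).symm, ?_⟩
          exact low_max hvn hv2 (D_of_freq hwf) hw k fun j _ => hag j
        · intro c hc
          refine lexLe_of_agree_right fun N => ?_
          obtain ⟨k, hk⟩ := len_ge b hinf N
          obtain ⟨m, hm, hmD⟩ := exists_max (VT_nonneg hvn hvS k fun j _ => hag j).1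
            (VT_two_pos hv2 k fun j _ => hag j)
          refine ⟨Phi b k m, ?_, hc _ ⟨Phi_max b k hm, freq_of_D hv1 (D_Phi k hmD)⟩⟩
          have h7 : agree (len b k 2) (Phi b k t20) (Phi b k m) :=
            Phi_len_agree b k (x := t20) (y := m) ((mem_max.1 hm).1.symm)
          intro i hi
          rw [← hagI k i (by omega)]
          exact h7 i (by omega)
      have hrat : IsRat v := by
        by_contra hc
        exact hnot ⟨hc, hv2, hinfv⟩
      exact rat_absurd hrat hvn hv2 hag hinf
    · push Not at hinf
      obtain ⟨K, hK⟩ := hinf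
      have hK' : ∀ k, K ≤ k → b k = true := fun k hk => by
        simpa using hK k hk
      have hVj : ∀ j : ℕ, VT b v (K + 2 * j) 0 = VT b v K 0 ∧ VT b v (K + 2 * j) 1 = VT b v K 1 ∧
          VT b v (K + 2 * j) 2 = VT b v K 2 - j * (VT b v K 0 + VT b v K 1) := by
        intro j
        induction j with
        | zero => simp
        | succ j ih =>
          obtain ⟨i0, i1, i2⟩ := ih
          obtain ⟨c0, c1, c2⟩ := VT_true (V := v) (hK' (K + 2 * j) (by omega))
          obtain ⟨d0, d1, d2⟩ := VT_true (V := v) (hK' (K + 2 * j + 1) (by omega))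
          rw [show K + 2 * (j + 1) = K + 2 * j + 1 + 1 by omega, d0, d1, d2, c0, c1, c2, i0, i1, i2]
          push_cast
          exact ⟨rfl, rfl, by ring⟩
      have h1 := (VT_nonneg hvn hvS K fun j _ => hag j).1
      have h10 := h1 0
      have h11 := h1 1
      have hsum : VT b v K 0 + VT b v K 1 ≤ 0 := by
        by_contra hc
        refine lin_absurd (C := VT b v K 2) (not_le.1 hc) fun j => ⟨j, le_rfl, ?_⟩
        have h6 := (VT_nonneg hvn hvS (K + 2 * j) fun j _ => hag j).1 2
        rw [(hVj j).2.2] at h6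
        linarith
      refine goober hv1 (g := Phi b K two) ?_
        (Dev0_Phi K (two_dev (by linarith) (by linarith)))
      refine maxB _ (Phi_max b K two_max) ?_
      refine lexLe_of_agree_left fun N => ?_
      obtain ⟨z, hz1, hz2⟩ := LL_iter hK' N 0 t20 (fun i hi => absurd hi (Nat.not_lt_zero i))
      refine ⟨Phi b (K + 2 * N) t20, ?_, hlow _⟩
      rw [hz1]
      rw [Nat.zero_add] at hz2
      exact agree_Phi K hz2
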